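/- Let N ≥ 2 and let ω_N denote the Lebesgue measure of the unit ball in ℝ^N. The following two statements are equivalent: (i) (Generalized Pólya conjecture) for every k ≥ 1 and every open set Ω ⊂ ℝ^N with 0 < |Ω| < ∞, λ_k(Ω) ≥ 16π⁴·(k/(ω_N|Ω|))^{4/N}; (ii) lim_{k→∞} λ_k*/k^{4/N} = 16π⁴/ω_N^{4/N}. -/

import Mathlib

open MeasureTheory Real Filter

noncomputable section

/-- The Laplacian of `u : ℝ^N → ℝ` as the sum of second derivatives along the
standard basis directions. -/
def lapN {N : ℕ} (u : EuclideanSpace ℝ (Fin N) → ℝ) :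
    EuclideanSpace ℝ (Fin N) → ℝ := fun x =>
  ∑ i : Fin N,
    fderiv ℝ (fun y => fderiv ℝ u y (EuclideanSpace.single i 1)) x
      (EuclideanSpace.single i 1)

/-- Admissible test functions on `Ω ⊆ ℝ^N`: smooth, compactly supported in `Ω`. -/
def AdmN {N : ℕ} (Ω : Set (EuclideanSpace ℝ (Fin N)))
    (u : EuclideanSpace ℝ (Fin N) → ℝ) : Prop :=
  ContDiff ℝ (⊤ : ℕ∞) u ∧ HasCompactSupport u ∧ tsupport u ⊆ Ω

/-- `k`-th Dirichlet eigenvalue of the biharmonic operator on `Ω ⊆ ℝ^N`: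
infimum over linearly independent `k`-tuples of admissible functions of the
maximum of the Rayleigh quotient over nonzero linear combinations. -/
def lamkN (N k : ℕ) (Ω : Set (EuclideanSpace ℝ (Fin N))) : ℝ :=
  sInf { μ | ∃ u : Fin k → (EuclideanSpace ℝ (Fin N) → ℝ),
    (∀ i, AdmN Ω (u i)) ∧ LinearIndependent ℝ u ∧
    μ = sSup { r | ∃ c : Fin k → ℝ, c ≠ 0 ∧
      r = (∫ x, (lapN (fun y => ∑ i, c i * u i y) x) ^ 2) /
          (∫ x, (∑ i, c i * u i x) ^ 2) } }

/-- `λ_k* = inf { λ_k(Ω) : Ω ⊆ ℝ^N open, |Ω| = 1 }`. -/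
def lamStar (N k : ℕ) : ℝ :=
  sInf { μ | ∃ Ω : Set (EuclideanSpace ℝ (Fin N)),
    IsOpen Ω ∧ volume Ω = 1 ∧ μ = lamkN N k Ω }

/-- `ω_N`: the Lebesgue measure of the unit ball in `ℝ^N`. -/
def omegaBall (N : ℕ) : ℝ :=
  (volume (Metric.ball (0 : EuclideanSpace ℝ (Fin N)) 1)).toReal

lemma contDiff_partial {N : ℕ} {u : EuclideanSpace ℝ (Fin N) → ℝ} {n m : WithTop ℕ∞}
    (hu : ContDiff ℝ n u) (hmn : m + 1 ≤ n) (v : EuclideanSpace ℝ (Fin N)) :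
    ContDiff ℝ m (fun y => fderiv ℝ u y v) :=
  (hu.fderiv_right hmn).clm_apply contDiff_const

lemma continuous_lapN {N : ℕ} {u : EuclideanSpace ℝ (Fin N) → ℝ} (hu : ContDiff ℝ 2 u) :
    Continuous (lapN u) := by
  unfold lapN
  refine continuous_finsetSum _ fun i _ => ?_
  exact (contDiff_partial (m := 0)
    (contDiff_partial (m := 1) hu (by norm_num [one_add_one_eq_two]) _) (by norm_num) _).continuous

lemma tsupport_lapN_subset {N : ℕ} (u : EuclideanSpace ℝ (Fin N) → ℝ) :
    tsupport (lapN u) ⊆ tsupport u := by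
  refine closure_minimal (fun x hx => ?_) (isClosed_tsupport u)
  by_contra hxu
  apply hx
  have h : u =ᶠ[nhds x] 0 := notMem_tsupport_iff_eventuallyEq.1 hxu
  refine Finset.sum_eq_zero fun i _ => ?_
  have h2 : (fun y => fderiv ℝ u y (EuclideanSpace.single i 1)) =ᶠ[nhds x] fun _ => 0 := by
    filter_upwards [h.fderiv (𝕜 := ℝ)] with y hy
    simp [hy]
  rw [h2.fderiv_eq]
  simp

lemma hasCompactSupport_lapN {N : ℕ} {u : EuclideanSpace ℝ (Fin N) → ℝ}
    (hu : HasCompactSupport u) : HasCompactSupport (lapN u) :=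
  hu.mono' (subset_closure.trans (tsupport_lapN_subset u))

lemma lapN_congr {N : ℕ} {u v : EuclideanSpace ℝ (Fin N) → ℝ} {x : EuclideanSpace ℝ (Fin N)}
    (h : u =ᶠ[nhds x] v) : lapN u x = lapN v x := by
  refine Finset.sum_congr rfl fun i _ => ?_
  have h2 : (fun y => fderiv ℝ u y (EuclideanSpace.single i 1)) =ᶠ[nhds x]
      fun y => fderiv ℝ v y (EuclideanSpace.single i 1) := by
    filter_upwards [h.fderiv (𝕜 := ℝ)] with y hy
    simp [hy]
  rw [h2.fderiv_eq]

lemma lapN_sum {N : ℕ} {ι : Type*} (s : Finset ι) {u : ι → EuclideanSpace ℝ (Fin N) → ℝ}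
    (hu : ∀ i, ContDiff ℝ 2 (u i)) (c : ι → ℝ) (x : EuclideanSpace ℝ (Fin N)) :
    lapN (fun y => ∑ i ∈ s, c i * u i y) x = ∑ i ∈ s, c i * lapN (u i) x := by
  have h1 (e y : EuclideanSpace ℝ (Fin N)) :
      fderiv ℝ (fun y => ∑ i ∈ s, c i * u i y) y e = ∑ i ∈ s, c i * fderiv ℝ (u i) y e := by
    have h (i : ι) : DifferentiableAt ℝ (u i) y := (hu i).contDiffAt.differentiableAt (by norm_num)
    rw [fderiv_fun_sum fun i _ => (h i).const_mul _]
    simp [fderiv_const_mul (h _)]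
  unfold lapN
  simp_rw [h1]
  have h2 (e : EuclideanSpace ℝ (Fin N)) :
      fderiv ℝ (fun y => ∑ i ∈ s, c i * fderiv ℝ (u i) y e) x e =
        ∑ i ∈ s, c i * fderiv ℝ (fun y => fderiv ℝ (u i) y e) x e := by
    have h (i : ι) : DifferentiableAt ℝ (fun y => fderiv ℝ (u i) y e) x :=
      (contDiff_partial (m := 1) (hu i) (by norm_num [one_add_one_eq_two])
        e).contDiffAt.differentiableAt
        (by norm_num)
    rw [fderiv_fun_sum fun i _ => (h i).const_mul _]
    simp [fderiv_const_mul (h _)]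
  simp_rw [h2]
  rw [Finset.sum_comm]
  simp [Finset.mul_sum]

lemma fderiv_comp_smul_sub {N : ℕ} {u : EuclideanSpace ℝ (Fin N) → ℝ} (hu : Differentiable ℝ u)
    (s : ℝ) (b x e : EuclideanSpace ℝ (Fin N)) :
    fderiv ℝ (fun y => u (s • y - b)) x e = s * fderiv ℝ u (s • x - b) e := by
  have h1 : HasFDerivAt (fun y : EuclideanSpace ℝ (Fin N) => s • y - b)
      (s • ContinuousLinearMap.id ℝ (EuclideanSpace ℝ (Fin N))) x :=
    ((hasFDerivAt_id x).const_smul s).sub_const b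
  have h2 := (hu (s • x - b)).hasFDerivAt.comp x h1
  have h3 : fderiv ℝ (fun y => u (s • y - b)) x = _ := h2.fderiv
  rw [h3]
  simp

lemma lapN_comp_smul_sub {N : ℕ} {u : EuclideanSpace ℝ (Fin N) → ℝ} (hu : ContDiff ℝ 2 u)
    (s : ℝ) (b x : EuclideanSpace ℝ (Fin N)) :
    lapN (fun y => u (s • y - b)) x = s ^ 2 * lapN u (s • x - b) := by
  unfold lapN
  simp_rw [fderiv_comp_smul_sub (hu.differentiable (by norm_num))]
  rw [Finset.mul_sum]
  refine Finset.sum_congr rfl fun i _ => ?_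
  have hd : Differentiable ℝ fun y => fderiv ℝ u y (EuclideanSpace.single i 1) :=
    (contDiff_partial (m := 1) hu (by norm_num [one_add_one_eq_two]) _).differentiable (by norm_num)
  have hd' : DifferentiableAt ℝ
      (fun y => fderiv ℝ u (s • y - b) (EuclideanSpace.single i 1)) x := by
    have := hd.comp (f := fun y : EuclideanSpace ℝ (Fin N) => s • y - b) (by fun_prop)
    exact this x
  rw [fderiv_const_mul hd', _root_.smul_apply, fderiv_comp_smul_sub hd]
  simp only [smul_eq_mul]
  ring

/-! ### Quadratic forms in the coefficients -/

lemma integral_sq_linComb {N : ℕ} {ι : Type*} [Fintype ι] {f : ι → EuclideanSpace ℝ (Fin N) → ℝ}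
    (hf : ∀ i, Continuous (f i)) (hc : ∀ i, HasCompactSupport (f i)) (c : ι → ℝ) :
    ∫ x, (∑ i, c i * f i x) ^ 2 = ∑ i, ∑ j, c i * c j * ∫ x, f i x * f j x := by
  have hint (i j : ι) : Integrable (fun x => f i x * f j x) :=
    ((hf i).mul (hf j)).integrable_of_hasCompactSupport ((hc i).mul_right)
  have h (x : EuclideanSpace ℝ (Fin N)) :
      (∑ i, c i * f i x) ^ 2 = ∑ i, ∑ j, c i * c j * (f i x * f j x) := by
    rw [sq, Finset.sum_mul_sum]
    exact Finset.sum_congr rfl fun i _ => Finset.sum_congr rfl fun j _ => by ring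
  simp_rw [h]
  rw [integral_finsetSum _ fun i _ => integrable_finsetSum _ fun j _ => (hint i j).const_mul _]
  refine Finset.sum_congr rfl fun i _ => ?_
  rw [integral_finsetSum _ fun j _ => (hint i j).const_mul _]
  exact Finset.sum_congr rfl fun j _ => integral_const_mul _ _

lemma continuous_quadForm {ι : Type*} [Fintype ι] (d : ι → ι → ℝ) :
    Continuous fun c : ι → ℝ => ∑ i, ∑ j, c i * c j * d i j := by
  fun_prop

lemma quadForm_smul {ι : Type*} [Fintype ι] (d : ι → ι → ℝ) (t : ℝ) (c : ι → ℝ) :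
    ∑ i, ∑ j, (t • c) i * (t • c) j * d i j = t ^ 2 * ∑ i, ∑ j, c i * c j * d i j := by
  simp only [Finset.mul_sum, Pi.smul_apply, smul_eq_mul]
  exact Finset.sum_congr rfl fun i _ => Finset.sum_congr rfl fun j _ => by ring

lemma quadForm_pos_of_sphere {ι : Type*} [Fintype ι] {d : ι → ι → ℝ}
    (h : ∀ c ∈ Metric.sphere (0 : ι → ℝ) 1, 0 < ∑ i, ∑ j, c i * c j * d i j) {c : ι → ℝ}
    (hc : c ≠ 0) : 0 < ∑ i, ∑ j, c i * c j * d i j := by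
  have hn : 0 < ‖c‖ := norm_pos_iff.2 hc
  have h1 := h (‖c‖⁻¹ • c) (by simp [norm_smul, hn.ne'])
  rw [quadForm_smul] at h1
  exact pos_of_mul_pos_right h1 (by positivity)

/-- Positive definiteness of a quadratic form is an open condition on its coefficients. -/
lemma eventually_quadForm_pos {ι : Type*} [Fintype ι] {d : ι → ι → ℝ} {D : ℕ → ι → ι → ℝ}
    (hD : ∀ i j, Tendsto (fun n => D n i j) atTop (nhds (d i j)))
    (h : ∀ c : ι → ℝ, c ≠ 0 → 0 < ∑ i, ∑ j, c i * c j * d i j) :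
    ∀ᶠ n in atTop, ∀ c : ι → ℝ, c ≠ 0 → 0 < ∑ i, ∑ j, c i * c j * D n i j := by
  have hS : IsCompact (Metric.sphere (0 : ι → ℝ) 1) := isCompact_sphere _ _
  obtain ⟨m, hm, hmS⟩ : ∃ m : ℝ, 0 < m ∧
      ∀ c ∈ Metric.sphere (0 : ι → ℝ) 1, m ≤ ∑ i, ∑ j, c i * c j * d i j := by
    rcases (Metric.sphere (0 : ι → ℝ) 1).eq_empty_or_nonempty with he | hne
    · exact ⟨1, one_pos, by simp [he]⟩
    · obtain ⟨c₀, hc₀, hmin⟩ := hS.exists_isMinOn hne (continuous_quadForm d).continuousOn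
      refine ⟨_, h c₀ ?_, fun c hc => hmin hc⟩
      rintro rfl
      simp at hc₀
  have hE : Tendsto (fun n => ∑ i, ∑ j, |D n i j - d i j|) atTop (nhds 0) := by
    have : Tendsto (fun n => ∑ i, ∑ j, |D n i j - d i j|) atTop
        (nhds (∑ i, ∑ j, |d i j - d i j|)) :=
      tendsto_finsetSum _ fun i _ => tendsto_finsetSum _ fun j _ =>
        ((hD i j).sub tendsto_const_nhds).abs
    simpa using this
  filter_upwards [hE.eventually_lt_const hm] with n hn c hc
  refine quadForm_pos_of_sphere (fun c hc => ?_) hc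
  have hc1 (i : ι) : |c i| ≤ 1 := by
    have := norm_le_pi_norm c i
    rwa [mem_sphere_zero_iff_norm.1 hc] at this
  have hdiff : ∑ i, ∑ j, c i * c j * d i j - ∑ i, ∑ j, c i * c j * D n i j ≤
      ∑ i, ∑ j, |D n i j - d i j| := by
    rw [← Finset.sum_sub_distrib]
    refine Finset.sum_le_sum fun i _ => ?_
    rw [← Finset.sum_sub_distrib]
    refine Finset.sum_le_sum fun j _ => ?_
    rw [← mul_sub, abs_sub_comm]
    refine (le_abs_self _).trans ?_
    rw [abs_mul, abs_mul]
    exact mul_le_of_le_one_left (abs_nonneg _) (mul_le_one₀ (hc1 i) (abs_nonneg _) (hc1 j))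
  linarith [hmS c hc]

lemma exists_quadForm_le {ι : Type*} [Fintype ι] (a b : ι → ι → ℝ)
    (h : ∀ c : ι → ℝ, c ≠ 0 → 0 < ∑ i, ∑ j, c i * c j * b i j) :
    ∃ M : ℝ, ∀ c : ι → ℝ, ∑ i, ∑ j, c i * c j * a i j ≤ M * ∑ i, ∑ j, c i * c j * b i j := by
  have hlim : ∀ i j, Tendsto (fun n : ℕ => b i j - ((n : ℝ) + 1)⁻¹ * a i j) atTop
      (nhds (b i j)) := by
    intro i j
    have h0 : Tendsto (fun n : ℕ => ((n : ℝ) + 1)⁻¹) atTop (nhds 0) := by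
      simpa [one_div] using tendsto_one_div_add_atTop_nhds_zero_nat (𝕜 := ℝ)
    simpa using (tendsto_const_nhds (x := b i j)).sub (h0.mul_const (a i j))
  obtain ⟨n, hn⟩ := (eventually_quadForm_pos hlim h).exists
  refine ⟨n + 1, fun c => ?_⟩
  by_cases hc : c = 0
  · simp [hc]
  have h1 := hn c hc
  have h2 : ∑ i, ∑ j, c i * c j * (b i j - ((n : ℝ) + 1)⁻¹ * a i j) =
      ∑ i, ∑ j, c i * c j * b i j - ((n : ℝ) + 1)⁻¹ * ∑ i, ∑ j, c i * c j * a i j := by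
    simp only [Finset.mul_sum, ← Finset.sum_sub_distrib]
    exact Finset.sum_congr rfl fun i _ => Finset.sum_congr rfl fun j _ => by ring
  rw [h2, sub_pos, inv_mul_lt_iff₀ (by positivity)] at h1
  exact h1.le

/-! ### The variational characterization -/

lemma lamkN_bddBelow (N k : ℕ) (Ω : Set (EuclideanSpace ℝ (Fin N))) :
    0 ∈ lowerBounds { μ | ∃ u : Fin k → (EuclideanSpace ℝ (Fin N) → ℝ),
    (∀ i, AdmN Ω (u i)) ∧ LinearIndependent ℝ u ∧
    μ = sSup { r | ∃ c : Fin k → ℝ, c ≠ 0 ∧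
      r = (∫ x, (lapN (fun y => ∑ i, c i * u i y) x) ^ 2) /
          (∫ x, (∑ i, c i * u i x) ^ 2) } } := by
  rintro μ ⟨u, -, -, rfl⟩
  refine Real.sSup_nonneg ?_
  rintro r ⟨c, -, rfl⟩
  exact div_nonneg (integral_nonneg fun x => sq_nonneg _) (integral_nonneg fun x => sq_nonneg _)

lemma lamkN_nonneg (N k : ℕ) (Ω : Set (EuclideanSpace ℝ (Fin N))) : 0 ≤ lamkN N k Ω :=
  Real.sInf_nonneg (lamkN_bddBelow N k Ω)

lemma lamStar_le {N k : ℕ} {Ω : Set (EuclideanSpace ℝ (Fin N))} (hΩ : IsOpen Ω)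
    (hv : volume Ω = 1) : lamStar N k ≤ lamkN N k Ω :=
  csInf_le ⟨0, by rintro μ ⟨Ω', -, -, rfl⟩; exact lamkN_nonneg N k Ω'⟩ ⟨Ω, hΩ, hv, rfl⟩

lemma lamkN_le_of_smooth {N k : ℕ} {Ω : Set (EuclideanSpace ℝ (Fin N))}
    {u : Fin k → EuclideanSpace ℝ (Fin N) → ℝ} (hu : ∀ i, AdmN Ω (u i)) {Λ : ℝ} (hΛ : 0 ≤ Λ)
    (hpos : ∀ c : Fin k → ℝ, c ≠ 0 → 0 < ∫ x, (∑ i, c i * u i x) ^ 2)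
    (hle : ∀ c : Fin k → ℝ, c ≠ 0 → ∫ x, (lapN (fun y => ∑ i, c i * u i y) x) ^ 2 ≤
      Λ * ∫ x, (∑ i, c i * u i x) ^ 2) :
    lamkN N k Ω ≤ Λ := by
  have hli : LinearIndependent ℝ u := by
    refine Fintype.linearIndependent_iff.2 fun c hc => ?_
    by_contra! hne
    have h1 := hpos c (fun h => by obtain ⟨i, hi⟩ := hne; exact hi (by simp [h]))
    have h2 (x : EuclideanSpace ℝ (Fin N)) : ∑ i, c i * u i x = 0 := by
      simpa using congrFun hc x
    simp [h2] at h1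
  refine (csInf_le ⟨0, lamkN_bddBelow N k Ω⟩ ⟨u, hu, hli, rfl⟩).trans ?_
  refine Real.sSup_le ?_ hΛ
  rintro r ⟨c, hc, rfl⟩
  exact (div_le_iff₀ (hpos c hc)).2 (hle c hc)

lemma AdmN.contDiff_two {N : ℕ} {Ω : Set (EuclideanSpace ℝ (Fin N))}
    {u : EuclideanSpace ℝ (Fin N) → ℝ} (hu : AdmN Ω u) : ContDiff ℝ 2 u :=
  hu.1.of_le (WithTop.coe_le_coe.2 (le_top : (2 : ℕ∞) ≤ ⊤))

lemma integral_lapN_sq {N : ℕ} {ι : Type*} [Fintype ι] {u : ι → EuclideanSpace ℝ (Fin N) → ℝ}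
    (hu : ∀ i, ContDiff ℝ 2 (u i)) (hs : ∀ i, HasCompactSupport (u i)) (c : ι → ℝ) :
    ∫ x, (lapN (fun y => ∑ i, c i * u i y) x) ^ 2 =
      ∑ i, ∑ j, c i * c j * ∫ x, lapN (u i) x * lapN (u j) x := by
  simp_rw [lapN_sum _ hu]
  exact integral_sq_linComb (fun i => continuous_lapN (hu i))
    (fun i => hasCompactSupport_lapN (hs i)) c

lemma integral_sq_pos_of_linearIndependent {N : ℕ} {ι : Type*} [Fintype ι]
    {u : ι → EuclideanSpace ℝ (Fin N) → ℝ}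
    (hu : ∀ i, Continuous (u i)) (hs : ∀ i, HasCompactSupport (u i))
    (hli : LinearIndependent ℝ u) {c : ι → ℝ} (hc : c ≠ 0) :
    0 < ∫ x, (∑ i, c i * u i x) ^ 2 := by
  obtain ⟨x, hx⟩ : ∃ x, ∑ i, c i * u i x ≠ 0 := by
    by_contra! h
    refine hc (funext fun i => Fintype.linearIndependent_iff.1 hli c (funext fun x => ?_) i)
    simpa using h x
  have hcs : HasCompactSupport fun x => ∑ i, c i * u i x := by
    have := HasCompactSupport.finset_sum
      (s := Finset.univ) (f := fun i x => c i * u i x) fun i _ => (hs i).mul_left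
    simpa only [Finset.sum_fn] using this
  refine Continuous.integral_pos_of_hasCompactSupport_nonneg_nonzero (x := x)
    (by fun_prop) ?_ (fun x => sq_nonneg _) (pow_ne_zero 2 hx)
  simp_rw [sq]
  exact hcs.mul_right

lemma rayleigh_le_sSup {N k : ℕ} {Ω : Set (EuclideanSpace ℝ (Fin N))}
    {u : Fin k → EuclideanSpace ℝ (Fin N) → ℝ} (hu : ∀ i, AdmN Ω (u i))
    (hli : LinearIndependent ℝ u) (c : Fin k → ℝ) :
    ∫ x, (lapN (fun y => ∑ i, c i * u i y) x) ^ 2 ≤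
      sSup { r | ∃ c : Fin k → ℝ, c ≠ 0 ∧
        r = (∫ x, (lapN (fun y => ∑ i, c i * u i y) x) ^ 2) / (∫ x, (∑ i, c i * u i x) ^ 2) } *
      ∫ x, (∑ i, c i * u i x) ^ 2 := by
  by_cases hc : c = 0
  · subst hc
    simp [lapN]
  have h2 (i : Fin k) := (hu i).contDiff_two
  have hs (i : Fin k) := (hu i).2.1
  have hpos {c : Fin k → ℝ} (hc : c ≠ 0) : 0 < ∫ x, (∑ i, c i * u i x) ^ 2 :=
    integral_sq_pos_of_linearIndependent (fun i => (h2 i).continuous) hs hli hc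
  rw [← div_le_iff₀ (hpos hc)]
  refine le_csSup ?_ ⟨c, hc, rfl⟩
  obtain ⟨M, hM⟩ := exists_quadForm_le (fun i j => ∫ x, lapN (u i) x * lapN (u j) x)
    (fun i j => ∫ x, u i x * u j x) fun c hc => by
      rw [← integral_sq_linComb (fun i => (h2 i).continuous) hs]
      exact hpos hc
  refine ⟨M, ?_⟩
  rintro r ⟨c, hc, rfl⟩
  rw [div_le_iff₀ (hpos hc), integral_lapN_sq h2 hs,
    integral_sq_linComb (fun i => (h2 i).continuous) hs]
  exact hM c

lemma exists_linearIndependent_admN {N : ℕ} (hN : N ≠ 0) (k : ℕ)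
    {Ω : Set (EuclideanSpace ℝ (Fin N))} (hΩ : IsOpen Ω) (hne : Ω.Nonempty) :
    ∃ u : Fin k → (EuclideanSpace ℝ (Fin N) → ℝ), (∀ i, AdmN Ω (u i)) ∧
      LinearIndependent ℝ u := by
  obtain ⟨x₀, hx₀⟩ := hne
  obtain ⟨f, hfΩ, hfc, hf, hfr, hf1⟩ :=
    exists_contDiff_tsupport_subset (n := (⊤ : ℕ∞)) (hΩ.mem_nhds hx₀)
  have : NeZero N := ⟨hN⟩
  have hzero : ∃ y, f y = 0 := by
    by_contra! h
    have : tsupport f = Set.univ := by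
      rw [tsupport, show Function.support f = Set.univ from Set.eq_univ_of_forall h, closure_univ]
    have hcpt : IsCompact (Set.univ : Set (EuclideanSpace ℝ (Fin N))) := this ▸ hfc
    exact noncompact_univ (EuclideanSpace ℝ (Fin N)) hcpt
  obtain ⟨y₀, hy₀⟩ := hzero
  have hrange : Set.Icc (0 : ℝ) 1 ⊆ Set.range f := by
    have := intermediate_value_univ y₀ x₀ hf.continuous
    rwa [hy₀, hf1] at this
  refine ⟨fun i x => f x ^ ((i : ℕ) + 1), fun i => ⟨hf.pow _, ?_, ?_⟩, ?_⟩
  · refine hfc.mono fun x hx => ?_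
    exact fun h => hx (by simp [h])
  · refine (closure_mono fun x hx => ?_).trans hfΩ
    exact fun h => hx (by simp [h])
  · refine Fintype.linearIndependent_iff.2 fun c hc i => ?_
    set p : Polynomial ℝ := ∑ j : Fin k, Polynomial.monomial ((j : ℕ) + 1) (c j) with hp
    have hp0 : p = 0 := by
      refine Polynomial.eq_zero_of_infinite_isRoot p
        ((Set.Icc_infinite (zero_lt_one (α := ℝ))).mono fun t ht => ?_)
      obtain ⟨x, rfl⟩ := hrange ht
      have := congrFun hc x
      simpa [hp, Polynomial.IsRoot, Polynomial.eval_finsetSum] using this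
    have h1 : p.coeff ((i : ℕ) + 1) = c i := by
      simp [hp, Polynomial.coeff_monomial, Fin.val_inj]
    rw [← h1, hp0, Polynomial.coeff_zero]

/-! ### Smoothing of test functions of class `C²` -/

/-- A sequence of smooth bump functions at the origin with supports shrinking to a point. -/
def shrinkingBump (N n : ℕ) : ContDiffBump (0 : EuclideanSpace ℝ (Fin N)) where
  rIn := 1 / ((n : ℝ) + 1) / 2
  rOut := 1 / ((n : ℝ) + 1)
  rIn_pos := by positivity
  rIn_lt_rOut := half_lt_self (by positivity)

lemma tendsto_rOut_shrinkingBump (N : ℕ) :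
    Tendsto (fun n => (shrinkingBump N n).rOut) atTop (nhds 0) :=
  tendsto_one_div_add_atTop_nhds_zero_nat

/-- The mollification of a function at scale `1 / (n + 1)`. -/
def mollify {N : ℕ} (n : ℕ) (u : EuclideanSpace ℝ (Fin N) → ℝ) :
    EuclideanSpace ℝ (Fin N) → ℝ :=
  MeasureTheory.convolution ((shrinkingBump N n).normed volume) u
    (ContinuousLinearMap.lsmul ℝ ℝ) volume

lemma contDiff_mollify {N : ℕ} (n : ℕ) {u : EuclideanSpace ℝ (Fin N) → ℝ} (hu : Continuous u) :
    ContDiff ℝ (⊤ : ℕ∞) (mollify n u) :=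
  (shrinkingBump N n).hasCompactSupport_normed.contDiff_convolution_left _
    (shrinkingBump N n).contDiff_normed hu.locallyIntegrable

lemma support_mollify_subset {N : ℕ} (n : ℕ) (u : EuclideanSpace ℝ (Fin N) → ℝ) :
    Function.support (mollify n u) ⊆ Metric.cthickening (1 / ((n : ℝ) + 1)) (tsupport u) := by
  refine (support_convolution_subset _).trans ?_
  rw [ContDiffBump.support_normed_eq]
  rintro _ ⟨a, ha, b, hb, rfl⟩
  refine Metric.mem_cthickening_of_dist_le _ b _ _ (subset_closure hb) ?_
  simpa [shrinkingBump] using (mem_ball_zero_iff.1 ha).le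

lemma tsupport_mollify_subset {N : ℕ} (n : ℕ) (u : EuclideanSpace ℝ (Fin N) → ℝ) :
    tsupport (mollify n u) ⊆ Metric.cthickening (1 / ((n : ℝ) + 1)) (tsupport u) :=
  closure_minimal (support_mollify_subset n u) Metric.isClosed_cthickening

lemma hasCompactSupport_mollify {N : ℕ} (n : ℕ) {u : EuclideanSpace ℝ (Fin N) → ℝ}
    (hu : HasCompactSupport u) : HasCompactSupport (mollify n u) :=
  IsCompact.of_isClosed_subset (IsCompact.cthickening hu) (isClosed_tsupport _)
    (tsupport_mollify_subset n u)

lemma fderiv_mollify {N : ℕ} (n : ℕ) {u : EuclideanSpace ℝ (Fin N) → ℝ} (hu : ContDiff ℝ 1 u)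
    (hs : HasCompactSupport u) (e : EuclideanSpace ℝ (Fin N)) :
    (fun x => fderiv ℝ (mollify n u) x e) = mollify n fun y => fderiv ℝ u y e := by
  ext x
  have hloc : LocallyIntegrable ((shrinkingBump N n).normed volume)
      (volume : Measure (EuclideanSpace ℝ (Fin N))) :=
    (shrinkingBump N n).continuous_normed.locallyIntegrable
  have h := hs.hasFDerivAt_convolution_right (ContinuousLinearMap.lsmul ℝ ℝ) hloc hu x
  have h' : fderiv ℝ (mollify n u) x = _ := h.fderiv
  rw [h']
  exact convolution_precompR_apply _ hloc (hs.fderiv (𝕜 := ℝ))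
    (hu.continuous_fderiv (by norm_num)) x e

lemma lapN_mollify {N : ℕ} (n : ℕ) {u : EuclideanSpace ℝ (Fin N) → ℝ} (hu : ContDiff ℝ 2 u)
    (hs : HasCompactSupport u) : lapN (mollify n u) = mollify n (lapN u) := by
  have h1 (e : EuclideanSpace ℝ (Fin N)) : ContDiff ℝ 1 fun y => fderiv ℝ u y e :=
    contDiff_partial hu (by norm_num [one_add_one_eq_two]) e
  have hs1 (e : EuclideanSpace ℝ (Fin N)) : HasCompactSupport fun y => fderiv ℝ u y e :=
    hs.fderiv_apply (𝕜 := ℝ) e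
  have h2 (e : EuclideanSpace ℝ (Fin N)) :
      Continuous fun y => fderiv ℝ (fun z => fderiv ℝ u z e) y e :=
    (contDiff_partial (m := 0) (h1 e) (by norm_num) e).continuous
  ext x
  unfold lapN
  simp_rw [fderiv_mollify n (hu.of_le (by norm_num)) hs]
  have h3 (e : EuclideanSpace ℝ (Fin N)) :
      fderiv ℝ (mollify n fun y => fderiv ℝ u y e) x e =
        mollify n (fun y => fderiv ℝ (fun z => fderiv ℝ u z e) y e) x :=
    congrFun (fderiv_mollify n (h1 e) (hs1 e) e) x
  simp_rw [h3]
  unfold mollify convolution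
  rw [← integral_finsetSum]
  · refine integral_congr_ae (Eventually.of_forall fun t => ?_)
    simp
  · intro i _
    refine Continuous.integrable_of_hasCompactSupport ?_ ?_
    · have := (shrinkingBump N n).continuous_normed (μ := volume)
      have h2' := h2 (EuclideanSpace.single i 1)
      simp only [ContinuousLinearMap.lsmul_apply, smul_eq_mul]
      exact this.mul (h2'.comp (by fun_prop))
    · exact (shrinkingBump N n).hasCompactSupport_normed.mul_right

lemma abs_mollify_le {N : ℕ} (n : ℕ) {u : EuclideanSpace ℝ (Fin N) → ℝ} (hu : Continuous u)
    {M : ℝ} (hM : ∀ x, |u x| ≤ M) (x : EuclideanSpace ℝ (Fin N)) : |mollify n u x| ≤ 3 * M := by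
  have h : dist (mollify n u x) (u x) ≤ 2 * M := by
    refine ContDiffBump.dist_normed_convolution_le hu.aestronglyMeasurable fun y _ => ?_
    rw [Real.dist_eq]
    linarith [abs_sub (u y) (u x), hM x, hM y]
  rw [Real.dist_eq] at h
  have := abs_sub_abs_le_abs_sub (mollify n u x) (u x)
  linarith [hM x]

lemma tendsto_integral_mollify_mul {N : ℕ} {u v : EuclideanSpace ℝ (Fin N) → ℝ}
    (hu : Continuous u) (hv : Continuous v) (hus : HasCompactSupport u)
    (hvs : HasCompactSupport v) :
    Tendsto (fun n => ∫ x, mollify n u x * mollify n v x) atTop (nhds (∫ x, u x * v x)) := by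
  obtain ⟨A, hA⟩ := hus.exists_bound_of_continuous hu
  obtain ⟨B, hB⟩ := hvs.exists_bound_of_continuous hv
  have hA0 : 0 ≤ A := (norm_nonneg _).trans (hA 0)
  have hB0 : 0 ≤ B := (norm_nonneg _).trans (hB 0)
  set K := Metric.cthickening 1 (tsupport u)
  have hK : IsCompact K := IsCompact.cthickening hus
  refine tendsto_integral_of_dominated_convergence (K.indicator fun _ => 3 * A * (3 * B))
    (fun n => ?_) ?_ (fun n => Eventually.of_forall fun x => ?_) (Eventually.of_forall fun x => ?_)
  · exact ((contDiff_mollify n hu).continuous.mul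
      (contDiff_mollify n hv).continuous).aestronglyMeasurable
  · exact (integrable_indicator_iff hK.measurableSet).2
      (integrableOn_const hK.measure_lt_top.ne)
  · by_cases hx : x ∈ K
    · rw [Set.indicator_of_mem hx, norm_mul]
      exact mul_le_mul (abs_mollify_le n hu hA x) (abs_mollify_le n hv hB x) (norm_nonneg _)
        (by positivity)
    · have h0 : mollify n u x = 0 := by
        by_contra hne
        refine hx (Metric.cthickening_mono ?_ _ (support_mollify_subset n u hne))
        rw [div_le_one (by positivity)]
        linarith [(Nat.cast_nonneg n : (0 : ℝ) ≤ n)]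
      simp [h0, hx]
  · exact (ContDiffBump.convolution_tendsto_right_of_continuous (tendsto_rOut_shrinkingBump N)
      hu x).mul (ContDiffBump.convolution_tendsto_right_of_continuous
        (tendsto_rOut_shrinkingBump N) hv x)

lemma eventually_tsupport_mollify_subset {N : ℕ} {Ω : Set (EuclideanSpace ℝ (Fin N))}
    (hΩ : IsOpen Ω) {u : EuclideanSpace ℝ (Fin N) → ℝ} (hs : HasCompactSupport u)
    (hsub : tsupport u ⊆ Ω) : ∀ᶠ n in atTop, tsupport (mollify n u) ⊆ Ω := by
  obtain ⟨δ, hδ, hδΩ⟩ := IsCompact.exists_cthickening_subset_open hs hΩ hsub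
  filter_upwards [(tendsto_one_div_add_atTop_nhds_zero_nat (𝕜 := ℝ)).eventually_lt_const hδ]
    with n hn
  exact (tsupport_mollify_subset n u).trans ((Metric.cthickening_mono hn.le _).trans hδΩ)

lemma lamkN_le_of_contDiff_two {N k : ℕ} {Ω : Set (EuclideanSpace ℝ (Fin N))} (hΩ : IsOpen Ω)
    {u : Fin k → EuclideanSpace ℝ (Fin N) → ℝ} (hu : ∀ i, ContDiff ℝ 2 (u i))
    (hs : ∀ i, HasCompactSupport (u i)) (hsub : ∀ i, tsupport (u i) ⊆ Ω) {Λ : ℝ} (hΛ : 0 ≤ Λ)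
    (hpos : ∀ c : Fin k → ℝ, c ≠ 0 → 0 < ∫ x, (∑ i, c i * u i x) ^ 2)
    (hle : ∀ c : Fin k → ℝ, c ≠ 0 → ∫ x, (lapN (fun y => ∑ i, c i * u i y) x) ^ 2 ≤
      Λ * ∫ x, (∑ i, c i * u i x) ^ 2) :
    lamkN N k Ω ≤ Λ := by
  refine le_of_forall_pos_le_add fun ε hε => ?_
  set a : Fin k → Fin k → ℝ := fun i j => ∫ x, lapN (u i) x * lapN (u j) x with ha
  set b : Fin k → Fin k → ℝ := fun i j => ∫ x, u i x * u j x with hb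
  set A : ℕ → Fin k → Fin k → ℝ := fun n i j =>
    ∫ x, lapN (mollify n (u i)) x * lapN (mollify n (u j)) x with hA
  set B : ℕ → Fin k → Fin k → ℝ := fun n i j => ∫ x, mollify n (u i) x * mollify n (u j) x with hB
  have hAlim (i j : Fin k) : Tendsto (fun n => A n i j) atTop (nhds (a i j)) := by
    simp_rw [hA, lapN_mollify _ (hu _) (hs _)]
    exact tendsto_integral_mollify_mul (continuous_lapN (hu i)) (continuous_lapN (hu j))
      (hasCompactSupport_lapN (hs i)) (hasCompactSupport_lapN (hs j))
  have hBlim (i j : Fin k) : Tendsto (fun n => B n i j) atTop (nhds (b i j)) :=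
    tendsto_integral_mollify_mul (hu i).continuous (hu j).continuous (hs i) (hs j)
  have hsplit (a b : Fin k → Fin k → ℝ) (c : Fin k → ℝ) :
      ∑ i, ∑ j, c i * c j * ((Λ + ε) * b i j - a i j) =
        (Λ + ε) * ∑ i, ∑ j, c i * c j * b i j - ∑ i, ∑ j, c i * c j * a i j := by
    simp only [Finset.mul_sum, ← Finset.sum_sub_distrib]
    exact Finset.sum_congr rfl fun i _ => Finset.sum_congr rfl fun j _ => by ring
  have hev := eventually_quadForm_pos (D := fun n i j => (Λ + ε) * B n i j - A n i j)
    (fun i j => ((hBlim i j).const_mul (Λ + ε)).sub (hAlim i j)) fun c hc => by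
      have h1 := hle c hc
      have h2 := hpos c hc
      rw [integral_lapN_sq hu hs] at h1
      rw [integral_sq_linComb (fun i => (hu i).continuous) hs] at h1 h2
      rw [hsplit, add_mul]
      linarith [mul_pos hε h2]
  obtain ⟨n, hn, hnΩ⟩ := (hev.and (eventually_all.2 fun i =>
    eventually_tsupport_mollify_subset hΩ (hs i) (hsub i))).exists
  have hv (i : Fin k) : AdmN Ω (mollify n (u i)) :=
    ⟨contDiff_mollify n (hu i).continuous, hasCompactSupport_mollify n (hs i), hnΩ i⟩
  have key (c : Fin k → ℝ) (hc : c ≠ 0) :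
      ∫ x, (lapN (fun y => ∑ i, c i * mollify n (u i) y) x) ^ 2 <
        (Λ + ε) * ∫ x, (∑ i, c i * mollify n (u i) x) ^ 2 := by
    have h1 := hn c hc
    rw [hsplit, sub_pos] at h1
    rw [integral_lapN_sq (fun i => (hv i).contDiff_two) (fun i => (hv i).2.1),
      integral_sq_linComb (fun i => (hv i).1.continuous) (fun i => (hv i).2.1)]
    exact h1
  refine lamkN_le_of_smooth hv (by positivity) (fun c hc => ?_) fun c hc => (key c hc).le
  exact pos_of_mul_pos_right
    ((integral_nonneg fun x => sq_nonneg _).trans_lt (key c hc)) (by positivity)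

lemma lamkN_le_of_embedding {N k : ℕ} {ι : Type*} [Fintype ι] (e : Fin k ↪ ι)
    {Ω : Set (EuclideanSpace ℝ (Fin N))} (hΩ : IsOpen Ω)
    {u : ι → EuclideanSpace ℝ (Fin N) → ℝ} (hu : ∀ i, ContDiff ℝ 2 (u i))
    (hs : ∀ i, HasCompactSupport (u i)) (hsub : ∀ i, tsupport (u i) ⊆ Ω) {Λ : ℝ} (hΛ : 0 ≤ Λ)
    (hpos : ∀ c : ι → ℝ, c ≠ 0 → 0 < ∫ x, (∑ i, c i * u i x) ^ 2)
    (hle : ∀ c : ι → ℝ, c ≠ 0 → ∫ x, (lapN (fun y => ∑ i, c i * u i y) x) ^ 2 ≤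
      Λ * ∫ x, (∑ i, c i * u i x) ^ 2) :
    lamkN N k Ω ≤ Λ := by
  have hsum (c : Fin k → ℝ) (x : EuclideanSpace ℝ (Fin N)) :
      ∑ i, c i * u (e i) x = ∑ j, Function.extend e c 0 j * u j x :=
    Fintype.sum_of_injective e e.injective _ _
      (fun j hj => by rw [Function.extend_apply' _ _ _ (by simpa using hj)]; simp)
      fun i => by rw [e.injective.extend_apply]
  have hne {c : Fin k → ℝ} (hc : c ≠ 0) : Function.extend e c 0 ≠ 0 := by
    refine fun h => hc (funext fun i => ?_)
    rw [← e.injective.extend_apply c 0 i, h]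
    rfl
  refine lamkN_le_of_contDiff_two (u := fun i => u (e i)) hΩ (fun i => hu _) (fun i => hs _)
    (fun i => hsub _) hΛ (fun c hc => ?_) fun c hc => ?_
  · simp_rw [hsum]
    exact hpos _ (hne hc)
  · simp_rw [hsum]
    exact hle _ (hne hc)

/-! ### Disjoint unions of scaled copies -/

lemma integral_comp_smul_sub {N : ℕ} (f : EuclideanSpace ℝ (Fin N) → ℝ) {s : ℝ} (hs : 0 < s)
    (b : EuclideanSpace ℝ (Fin N)) :
    ∫ x, f (s • x - b) = (s ^ N)⁻¹ * ∫ x, f x := by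
  have h := Measure.integral_comp_smul volume (fun y => f (y - b)) s
  rw [h, integral_sub_right_eq_self f b, finrank_euclideanSpace_fin,
    abs_of_pos (by positivity), smul_eq_mul]

lemma integral_sq_sum_copies {N : ℕ} {L : Type*} [Fintype L]
    {g : L → EuclideanSpace ℝ (Fin N) → ℝ} (hg : ∀ l, Continuous (g l))
    (hgs : ∀ l, HasCompactSupport (g l)) {Ω : Set (EuclideanSpace ℝ (Fin N))}
    (hsub : ∀ l, tsupport (g l) ⊆ Ω) {s : ℝ} (hs : 0 < s) {b : L → EuclideanSpace ℝ (Fin N)}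
    (hdisj : ∀ l l', l ≠ l' → ∀ x, s • x - b l ∈ Ω → s • x - b l' ∉ Ω) :
    ∫ x, (∑ l, g l (s • x - b l)) ^ 2 = (s ^ N)⁻¹ * ∑ l, ∫ x, (g l x) ^ 2 := by
  have h (x : EuclideanSpace ℝ (Fin N)) :
      (∑ l, g l (s • x - b l)) ^ 2 = ∑ l, (g l (s • x - b l)) ^ 2 := by
    rw [sq, Finset.sum_mul_sum]
    refine Finset.sum_congr rfl fun l _ => ?_
    rw [sq, Finset.sum_eq_single l]
    · intro l' _ hl
      by_contra hne
      exact hdisj l l' hl.symm x (hsub l (subset_closure (left_ne_zero_of_mul hne)))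
        (hsub l' (subset_closure (right_ne_zero_of_mul hne)))
    · simp
  simp_rw [h]
  rw [integral_finsetSum, Finset.mul_sum]
  · exact Finset.sum_congr rfl fun l _ => integral_comp_smul_sub (fun y => (g l y) ^ 2) hs (b l)
  · intro l _
    have hI : Integrable fun y => (g l y) ^ 2 := by
      simp_rw [sq]
      exact ((hg l).mul (hg l)).integrable_of_hasCompactSupport (hgs l).mul_right
    have h2 : Integrable fun y => (fun z => (g l (z - b l)) ^ 2) (s • y) :=
      (hI.comp_sub_right (b l)).comp_smul hs.ne'
    exact h2

lemma volume_preimage_smul_sub {N : ℕ} (Ω : Set (EuclideanSpace ℝ (Fin N))) {s : ℝ} (hs : 0 < s)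
    (b : EuclideanSpace ℝ (Fin N)) :
    volume {x : EuclideanSpace ℝ (Fin N) | s • x - b ∈ Ω} =
      ENNReal.ofReal (s ^ N)⁻¹ * volume Ω := by
  have h := Measure.addHaar_preimage_smul volume hs.ne' ((fun y => y - b) ⁻¹' Ω)
  simp only [sub_eq_add_neg, measure_preimage_add_right] at h
  rw [finrank_euclideanSpace_fin, abs_of_pos (by positivity)] at h
  rw [← h]
  simp [Set.preimage, sub_eq_add_neg]

lemma lamkN_copies_le {N k j : ℕ} {Ω : Set (EuclideanSpace ℝ (Fin N))} (hΩ : IsOpen Ω)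
    {u : Fin k → EuclideanSpace ℝ (Fin N) → ℝ} (hu : ∀ i, AdmN Ω (u i))
    (hli : LinearIndependent ℝ u) {μ : ℝ} (hμ : 0 ≤ μ)
    (hle : ∀ c : Fin k → ℝ, ∫ x, (lapN (fun y => ∑ i, c i * u i y) x) ^ 2 ≤
      μ * ∫ x, (∑ i, c i * u i x) ^ 2) {s : ℝ} (hs : 0 < s)
    {b : Fin j → EuclideanSpace ℝ (Fin N)}
    (hdisj : ∀ l l', l ≠ l' → ∀ x, s • x - b l ∈ Ω → s • x - b l' ∉ Ω) :
    lamkN N (j * k) (⋃ l, {x | s • x - b l ∈ Ω}) ≤ s ^ 4 * μ := by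
  have h2 (i : Fin k) := (hu i).contDiff_two
  have hcs (i : Fin k) := (hu i).2.1
  have hmap (l : Fin j) : Continuous fun x : EuclideanSpace ℝ (Fin N) => s • x - b l := by
    fun_prop
  have hopen (l : Fin j) : IsOpen {x : EuclideanSpace ℝ (Fin N) | s • x - b l ∈ Ω} :=
    hΩ.preimage (hmap l)
  have hwC (c : Fin j × Fin k → ℝ) (l : Fin j) :
      ContDiff ℝ 2 fun y => ∑ i, c (l, i) * u i y :=
    ContDiff.sum fun i _ => contDiff_const.mul (h2 i)
  have hwS (c : Fin j × Fin k → ℝ) (l : Fin j) :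
      HasCompactSupport fun y => ∑ i, c (l, i) * u i y := by
    have := HasCompactSupport.finset_sum
      (s := Finset.univ) (f := fun i x => c (l, i) * u i x) fun i _ => (hcs i).mul_left
    simpa only [Finset.sum_fn] using this
  have hwT (c : Fin j × Fin k → ℝ) (l : Fin j) :
      tsupport (fun y => ∑ i, c (l, i) * u i y) ⊆ Ω := by
    have hcl : IsClosed (⋃ i, tsupport (u i)) :=
      isClosed_iUnion_of_finite fun i => isClosed_tsupport _
    refine (closure_minimal (fun x hx => ?_) hcl).trans (Set.iUnion_subset fun i => (hu i).2.2)
    obtain ⟨i, -, hi⟩ := Finset.exists_ne_zero_of_sum_ne_zero hx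
    exact Set.mem_iUnion.2 ⟨i, subset_closure (right_ne_zero_of_mul hi)⟩
  have hB (c : Fin j × Fin k → ℝ) : ∫ x, (∑ p : Fin j × Fin k, c p * u p.2 (s • x - b p.1)) ^ 2 =
      (s ^ N)⁻¹ * ∑ l, ∫ x, (∑ i, c (l, i) * u i x) ^ 2 := by
    rw [← integral_sq_sum_copies (fun l => (hwC c l).continuous) (hwS c) (hwT c) hs hdisj]
    simp_rw [Fintype.sum_prod_type]
  have hvC (p : Fin j × Fin k) : ContDiff ℝ 2 fun y => u p.2 (s • y - b p.1) :=
    (h2 p.2).comp (by fun_prop)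
  have hA (c : Fin j × Fin k → ℝ) :
      ∫ x, (lapN (fun y => ∑ p : Fin j × Fin k, c p * u p.2 (s • y - b p.1)) x) ^ 2 =
      s ^ 4 * ((s ^ N)⁻¹ * ∑ l, ∫ x, (lapN (fun y => ∑ i, c (l, i) * u i y) x) ^ 2) := by
    rw [← integral_sq_sum_copies (fun l => continuous_lapN (hwC c l))
      (fun l => hasCompactSupport_lapN (hwS c l))
      (fun l => (tsupport_lapN_subset _).trans (hwT c l)) hs hdisj, ← integral_const_mul]
    refine integral_congr_ae (Eventually.of_forall fun x => ?_)
    simp only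
    rw [lapN_sum _ hvC, Fintype.sum_prod_type]
    simp_rw [lapN_sum _ h2, lapN_comp_smul_sub (h2 _)]
    rw [show s ^ 4 = (s ^ 2) ^ 2 by ring, ← mul_pow]
    congr 1
    simp only [Finset.mul_sum]
    exact Finset.sum_congr rfl fun l _ => Finset.sum_congr rfl fun i _ => by ring
  refine lamkN_le_of_embedding (ι := Fin j × Fin k) finProdFinEquiv.symm.toEmbedding
    (isOpen_iUnion hopen) hvC (fun p => ?_) (fun p => ?_) (by positivity) (fun c hc => ?_)
    fun c _ => ?_
  · exact (hcs p.2).comp_homeomorph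
      ((Homeomorph.smulOfNeZero s hs.ne').trans (Homeomorph.subRight (b p.1)))
  · refine Set.Subset.trans ?_ (Set.subset_iUnion _ p.1)
    refine (tsupport_comp_subset_preimage (u p.2) (hmap p.1)).trans
      (Set.preimage_mono (hu p.2).2.2)
  · rw [hB]
    refine mul_pos (by positivity) ?_
    obtain ⟨⟨l, i⟩, hli'⟩ := Function.ne_iff.1 hc
    refine Finset.sum_pos' (fun l _ => integral_nonneg fun x => sq_nonneg _)
      ⟨l, Finset.mem_univ _, ?_⟩
    exact integral_sq_pos_of_linearIndependent (fun i => (h2 i).continuous) hcs hli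
      (c := fun i => c (l, i)) fun h => hli' (congrFun h i)
  · rw [hA, hB, mul_assoc (s ^ 4), mul_left_comm μ]
    gcongr
    rw [Finset.mul_sum]
    exact Finset.sum_le_sum fun l _ => hle fun i => c (l, i)

lemma exists_separated_translates {N : ℕ} [NeZero N] (j : ℕ) {ρ : ℝ} (hρ : 0 < ρ) (s : ℝ) :
    ∃ b : Fin j → EuclideanSpace ℝ (Fin N), ∀ l l', l ≠ l' → ∀ x,
      s • x - b l ∈ Metric.ball 0 ρ → s • x - b l' ∉ Metric.ball 0 ρ := by
  refine ⟨fun l => EuclideanSpace.single 0 (2 * ρ * (l : ℕ)), fun l l' hl x hx hx' => ?_⟩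
  rw [mem_ball_zero_iff] at hx hx'
  have h1 := norm_sub_le (s • x - EuclideanSpace.single 0 (2 * ρ * (l : ℕ)))
    (s • x - EuclideanSpace.single 0 (2 * ρ * (l' : ℕ)))
  have h2 : s • x - EuclideanSpace.single (0 : Fin N) (2 * ρ * (l : ℕ)) -
      (s • x - EuclideanSpace.single 0 (2 * ρ * (l' : ℕ))) =
      EuclideanSpace.single 0 (2 * ρ * ((l' : ℕ) - (l : ℕ))) := by
    ext i
    by_cases hi : i = 0 <;> simp [hi]
    ring
  rw [h2, PiLp.norm_single, Real.norm_eq_abs, abs_mul, abs_of_pos (by positivity)] at h1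
  have h3 : (1 : ℝ) ≤ |((l' : ℕ) : ℝ) - (l : ℕ)| := by
    have : (1 : ℤ) ≤ |((l' : ℕ) : ℤ) - (l : ℕ)| :=
      Int.one_le_abs (sub_ne_zero.2 fun h => hl (Fin.ext (by exact_mod_cast h.symm)))
    exact_mod_cast this
  nlinarith

lemma lamStar_mul_le {N : ℕ} (hN : N ≠ 0) {k j : ℕ} (hk : 1 ≤ k) (hj : 1 ≤ j)
    {Ω : Set (EuclideanSpace ℝ (Fin N))} (hΩ : IsOpen Ω) (h0 : 0 < volume Ω)
    (ht : volume Ω < ⊤) :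
    lamStar N (j * k) ≤ ((j : ℝ) * (volume Ω).toReal) ^ ((4 : ℝ) / N) * lamkN N k Ω := by
  have : NeZero N := ⟨hN⟩
  have hV : 0 < (volume Ω).toReal := ENNReal.toReal_pos h0.ne' ht.ne
  have hj' : (0 : ℝ) < j := by exact_mod_cast hj
  rw [← div_le_iff₀' (by positivity)]
  have hne : Ω.Nonempty := nonempty_of_measure_ne_zero h0.ne'
  obtain ⟨u₀, hu₀, hli₀⟩ := exists_linearIndependent_admN hN k hΩ hne
  refine le_csInf ⟨_, u₀, hu₀, hli₀, rfl⟩ ?_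
  rintro μ ⟨u, hu, hli, hμ⟩
  have hμ0 : 0 ≤ μ := lamkN_bddBelow N k Ω ⟨u, hu, hli, hμ⟩
  have hle (c : Fin k → ℝ) := rayleigh_le_sSup hu hli c
  rw [← hμ] at hle
  rw [div_le_iff₀' (by positivity)]
  obtain ⟨ρ, hρ, hρu⟩ : ∃ ρ : ℝ, 0 < ρ ∧ (⋃ i, tsupport (u i)) ⊆ Metric.ball 0 ρ := by
    have hb : Bornology.IsBounded (⋃ i, tsupport (u i)) :=
      (isCompact_iUnion fun i => (hu i).2.1).isBounded
    obtain ⟨ρ, hρ⟩ := hb.subset_ball 0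
    exact ⟨max ρ 1, by positivity, hρ.trans (Metric.ball_subset_ball (le_max_left _ _))⟩
  set Ω' := Ω ∩ Metric.ball 0 ρ with hΩ'
  have hopen : IsOpen Ω' := hΩ.inter Metric.isOpen_ball
  have hu' (i : Fin k) : AdmN Ω' (u i) :=
    ⟨(hu i).1, (hu i).2.1, Set.subset_inter (hu i).2.2
      ((Set.subset_iUnion (fun i => tsupport (u i)) i).trans hρu)⟩
  have hne' : Ω'.Nonempty := by
    have hu1 := hli.ne_zero ⟨0, hk⟩
    obtain ⟨x, hx⟩ := Function.ne_iff.1 hu1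
    exact ⟨x, (hu' ⟨0, hk⟩).2.2 (subset_closure hx)⟩
  have h0' : 0 < volume Ω' := hopen.measure_pos _ hne'
  have hle' : volume Ω' ≤ volume Ω := measure_mono Set.inter_subset_left
  have ht' : volume Ω' < ⊤ := hle'.trans_lt ht
  have hV' : 0 < (volume Ω').toReal := ENNReal.toReal_pos h0'.ne' ht'.ne
  have hVV : (volume Ω').toReal ≤ (volume Ω).toReal := ENNReal.toReal_mono ht.ne hle'
  set s : ℝ := ((j : ℝ) * (volume Ω').toReal) ^ ((1 : ℝ) / N) with hs_def
  have hs : 0 < s := by positivity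
  have hNr : (N : ℝ) ≠ 0 := by exact_mod_cast hN
  have hsN : s ^ N = (j : ℝ) * (volume Ω').toReal := by
    rw [hs_def, ← Real.rpow_natCast, ← Real.rpow_mul (by positivity), one_div_mul_cancel hNr,
      Real.rpow_one]
  have hs4 : s ^ 4 = ((j : ℝ) * (volume Ω').toReal) ^ ((4 : ℝ) / N) := by
    rw [hs_def, ← Real.rpow_natCast, ← Real.rpow_mul (by positivity)]
    congr 1
    push_cast
    ring
  obtain ⟨b, hb⟩ := exists_separated_translates (N := N) j hρ s
  have hdisj : ∀ l l', l ≠ l' → ∀ x, s • x - b l ∈ Ω' → s • x - b l' ∉ Ω' :=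
    fun l l' hl x hx hx' => hb l l' hl x hx.2 hx'.2
  have hopenW (l : Fin j) : IsOpen {x : EuclideanSpace ℝ (Fin N) | s • x - b l ∈ Ω'} :=
    hopen.preimage (f := fun x : EuclideanSpace ℝ (Fin N) => s • x - b l) (by fun_prop)
  have hvol : volume (⋃ l, {x : EuclideanSpace ℝ (Fin N) | s • x - b l ∈ Ω'}) = 1 := by
    have hpw : Pairwise fun l l' => Disjoint {x : EuclideanSpace ℝ (Fin N) | s • x - b l ∈ Ω'}
        {x : EuclideanSpace ℝ (Fin N) | s • x - b l' ∈ Ω'} :=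
      fun l l' hl => Set.disjoint_left.2 fun x hx hx' => hdisj l l' hl x hx hx'
    rw [measure_iUnion hpw
      (fun l => (hopenW l).measurableSet)]
    simp_rw [volume_preimage_smul_sub Ω' hs]
    rw [tsum_fintype, Finset.sum_const, Finset.card_univ, Fintype.card_fin, nsmul_eq_mul,
      ← ENNReal.ofReal_toReal ht'.ne, ← ENNReal.ofReal_mul (by positivity),
      ← ENNReal.ofReal_natCast, ← ENNReal.ofReal_mul (by positivity), hsN]
    rw [← ENNReal.ofReal_one]
    congr 1
    field_simp
  calc lamStar N (j * k) ≤ _ := lamStar_le (isOpen_iUnion hopenW) hvol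
    _ ≤ s ^ 4 * μ := lamkN_copies_le hopen hu' hli hμ0 hle hs hdisj
    _ ≤ _ := by rw [hs4]; gcongr

/-! ### Tensor products of functions of one variable -/

/-- The function `x ↦ ∏ i, f i (x i)`. -/
def tensorProd {N : ℕ} (f : Fin N → ℝ → ℝ) : EuclideanSpace ℝ (Fin N) → ℝ :=
  fun x => ∏ i, f i (x i)

lemma contDiff_tensorProd {N : ℕ} {n : WithTop ℕ∞} {f : Fin N → ℝ → ℝ}
    (hf : ∀ i, ContDiff ℝ n (f i)) : ContDiff ℝ n (tensorProd f) :=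
  contDiff_prod fun i _ => (hf i).comp (by fun_prop)

lemma fderiv_tensorProd {N : ℕ} {f : Fin N → ℝ → ℝ} (hf : ∀ j, Differentiable ℝ (f j))
    {i : Fin N} {f' : ℝ → ℝ} (hfi : ∀ t, HasDerivAt (f i) (f' t) t) :
    (fun x => fderiv ℝ (tensorProd f) x (EuclideanSpace.single i 1)) =
      tensorProd (Function.update f i f') := by
  ext x
  have h1 (j : Fin N) : HasFDerivAt (fun x : EuclideanSpace ℝ (Fin N) => f j (x j))
      (deriv (f j) (x j) • (EuclideanSpace.proj j : EuclideanSpace ℝ (Fin N) →L[ℝ] ℝ)) x :=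
    (hf j (x j)).hasDerivAt.comp_hasFDerivAt x
      (EuclideanSpace.proj j : EuclideanSpace ℝ (Fin N) →L[ℝ] ℝ).hasFDerivAt
  have h2 := HasFDerivAt.finsetProd (u := Finset.univ) fun j _ => h1 j
  have h3 : fderiv ℝ (tensorProd f) x = _ := h2.fderiv
  rw [h3, _root_.sum_apply, Finset.sum_eq_single i]
  · have h4 : tensorProd (Function.update f i f') x =
        ∏ j, Function.update (fun j => f j (x j)) i (f' (x i)) j := by
      refine Finset.prod_congr rfl fun j _ => ?_
      rcases eq_or_ne j i with rfl | hj
      · simp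
      · simp [hj]
    rw [h4, Finset.prod_update_of_mem (Finset.mem_univ i), ← Finset.erase_eq, (hfi (x i)).deriv]
    simp [mul_comm]
  · intro j _ hj
    simp [hj]
  · simp

lemma lapN_tensorProd {N : ℕ} {f f' f'' : Fin N → ℝ → ℝ}
    (hf : ∀ i t, HasDerivAt (f i) (f' i t) t) (hf' : ∀ i t, HasDerivAt (f' i) (f'' i t) t)
    (x : EuclideanSpace ℝ (Fin N)) :
    lapN (tensorProd f) x = ∑ i, tensorProd (Function.update f i (f'' i)) x := by
  have hd (j : Fin N) : Differentiable ℝ (f j) := fun t => (hf j t).differentiableAt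
  refine Finset.sum_congr rfl fun i _ => ?_
  rw [fderiv_tensorProd hd (hf i)]
  have h := fderiv_tensorProd (f := Function.update f i (f' i)) (i := i) (f' := f'' i)
    (fun j => by
      rcases eq_or_ne j i with rfl | hj
      · rw [Function.update_self]
        exact fun t => (hf' j t).differentiableAt
      · simpa [hj] using hd j)
    (by simpa using hf' i)
  rw [Function.update_idem] at h
  exact congrFun h x

/-- The open unit cube. -/
def unitCube (N : ℕ) : Set (EuclideanSpace ℝ (Fin N)) := {x | ∀ i, x i ∈ Set.Ioo (0 : ℝ) 1}

lemma isOpen_unitCube (N : ℕ) : IsOpen (unitCube N) := by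
  simp only [unitCube, Set.ofPred_forall]
  exact isOpen_iInter_of_finite fun i => isOpen_Ioo.preimage (by fun_prop)

lemma integral_unitCube_tensorProd {N : ℕ} (f : Fin N → ℝ → ℝ) :
    ∫ x in unitCube N, tensorProd f x = ∏ i, ∫ t in Set.Ioo (0 : ℝ) 1, f i t := by
  rw [← integral_indicator (isOpen_unitCube N).measurableSet]
  simp_rw [← integral_indicator (measurableSet_Ioo (a := (0 : ℝ)) (b := 1))]
  rw [← integral_fintype_prod_volume_eq_prod,
    ← (PiLp.volume_preserving_ofLp (Fin N)).integral_comp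
      (MeasurableEquiv.toLp 2 (Fin N → ℝ)).symm.measurableEmbedding]
  refine integral_congr_ae (Eventually.of_forall fun x => ?_)
  by_cases hx : x ∈ unitCube N
  · rw [Set.indicator_of_mem hx]
    exact Finset.prod_congr rfl fun i _ => (Set.indicator_of_mem (hx i) _).symm
  · simp only [Set.indicator_of_notMem hx]
    obtain ⟨i, hi⟩ : ∃ i, x i ∉ Set.Ioo (0 : ℝ) 1 := by
      simpa only [unitCube, Set.mem_ofPred_eq, not_forall] using hx
    exact (Finset.prod_eq_zero (Finset.mem_univ i) (Set.indicator_of_notMem hi _)).symm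

/-! ### Sine modes on the unit cube -/

/-- The function `t ↦ sin (π n t)`. -/
def sineMode (n : ℕ) (t : ℝ) : ℝ := sin (π * n * t)

/-- The product of the sine modes with frequencies `m`. -/
def sineProd {N : ℕ} (m : Fin N → ℕ) : EuclideanSpace ℝ (Fin N) → ℝ :=
  tensorProd fun i => sineMode (m i)

lemma hasDerivAt_sin_mul (a t : ℝ) : HasDerivAt (fun t => sin (a * t)) (a * cos (a * t)) t := by
  simpa [mul_comm] using ((hasDerivAt_id t).const_mul a).sin

lemma hasDerivAt_cos_mul (a t : ℝ) : HasDerivAt (fun t => cos (a * t)) (-(a * sin (a * t))) t := by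
  simpa [mul_comm] using ((hasDerivAt_id t).const_mul a).cos

lemma contDiff_sineProd {N : ℕ} {n : WithTop ℕ∞} (m : Fin N → ℕ) : ContDiff ℝ n (sineProd m) :=
  contDiff_tensorProd fun i => by unfold sineMode; fun_prop

lemma lapN_sineProd {N : ℕ} (m : Fin N → ℕ) (x : EuclideanSpace ℝ (Fin N)) :
    lapN (sineProd m) x = -(π ^ 2 * ∑ i, (m i : ℝ) ^ 2) * sineProd m x := by
  rw [sineProd, lapN_tensorProd (f' := fun i t => π * m i * cos (π * m i * t))
    (f'' := fun i t => π * m i * -(π * m i * sin (π * m i * t)))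
    (f := fun i => sineMode (m i)) (fun i t => hasDerivAt_sin_mul _ t)
    (fun i t => (hasDerivAt_cos_mul _ t).const_mul _),
    Finset.mul_sum, ← Finset.sum_neg_distrib, Finset.sum_mul]
  refine Finset.sum_congr rfl fun i _ => ?_
  have h (j : Fin N) : Function.update (fun i => sineMode (m i)) i
      (fun t => π * m i * -(π * m i * sin (π * m i * t))) j (x j) =
      (if j = i then -(π ^ 2 * (m i : ℝ) ^ 2) else 1) * sineMode (m j) (x j) := by
    rcases eq_or_ne j i with rfl | hj
    · simp [sineMode]
      ring
    · simp [hj]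
  simp only [tensorProd, h, Finset.prod_mul_distrib, Finset.prod_ite_eq', Finset.mem_univ, if_true]

lemma integral_cos_pi_mul_int {n : ℤ} (hn : n ≠ 0) : ∫ t in (0 : ℝ)..1, cos (π * n * t) = 0 := by
  have h : π * n ≠ 0 := mul_ne_zero pi_ne_zero (by exact_mod_cast hn)
  rw [intervalIntegral.integral_comp_mul_left (fun t => cos t) h, integral_cos]
  simp [mul_comm π, sin_int_mul_pi]

lemma integral_sineMode_mul {m n : ℕ} (hm : 1 ≤ m) (hn : 1 ≤ n) :
    ∫ t in Set.Ioo (0 : ℝ) 1, sineMode m t * sineMode n t = if m = n then 1 / 2 else 0 := by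
  have h (t : ℝ) : sineMode m t * sineMode n t =
      1 / 2 * (cos (π * ((m - n : ℤ) : ℝ) * t) - cos (π * ((m + n : ℤ) : ℝ) * t)) := by
    have h1 : π * ((m - n : ℤ) : ℝ) * t = π * m * t - π * n * t := by push_cast; ring
    have h2 : π * ((m + n : ℤ) : ℝ) * t = π * m * t + π * n * t := by push_cast; ring
    rw [h1, h2, cos_sub, cos_add, sineMode, sineMode]
    ring
  rw [← integral_Ioc_eq_integral_Ioo, ← intervalIntegral.integral_of_le zero_le_one]
  simp_rw [h]
  rw [intervalIntegral.integral_const_mul, intervalIntegral.integral_sub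
    (Continuous.intervalIntegrable (by fun_prop) _ _)
    (Continuous.intervalIntegrable (by fun_prop) _ _),
    integral_cos_pi_mul_int (n := m + n) (by omega)]
  split_ifs with hmn
  · simp [hmn]
  · rw [integral_cos_pi_mul_int (n := m - n) (by omega)]
    simp

lemma integral_sineProd_mul {N : ℕ} {m n : Fin N → ℕ} (hm : ∀ i, 1 ≤ m i) (hn : ∀ i, 1 ≤ n i) :
    ∫ x in unitCube N, sineProd m x * sineProd n x = if m = n then (1 / 2) ^ N else 0 := by
  have h (x : EuclideanSpace ℝ (Fin N)) : sineProd m x * sineProd n x =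
      tensorProd (fun i t => sineMode (m i) t * sineMode (n i) t) x := by
    simp [sineProd, tensorProd, Finset.prod_mul_distrib]
  simp_rw [h]
  rw [integral_unitCube_tensorProd]
  simp_rw [integral_sineMode_mul (hm _) (hn _)]
  split_ifs with hmn
  · simp [hmn]
  · obtain ⟨i, hi⟩ := Function.ne_iff.1 hmn
    exact Finset.prod_eq_zero (Finset.mem_univ i) (if_neg hi)

lemma isCompact_unitBox (N : ℕ) :
    IsCompact {x : EuclideanSpace ℝ (Fin N) | ∀ i, x i ∈ Set.Icc (0 : ℝ) 1} := by
  have h := (PiLp.homeomorph 2 fun _ : Fin N => ℝ).isCompact_preimage.2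
    (isCompact_univ_pi fun _ : Fin N => isCompact_Icc (a := (0 : ℝ)) (b := 1))
  convert h using 1
  ext x
  simp only [Set.mem_preimage, Set.mem_univ_pi]
  rfl

lemma unitCube_subset_unitBox (N : ℕ) :
    unitCube N ⊆ {x : EuclideanSpace ℝ (Fin N) | ∀ i, x i ∈ Set.Icc (0 : ℝ) 1} :=
  fun _ hx i => Set.Ioo_subset_Icc_self (hx i)

/-- Parseval's identity for finite sine sums on the unit cube. -/
lemma integral_sq_sum_sineProd {N : ℕ} {ι : Type*} [Fintype ι] {m : ι → Fin N → ℕ}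
    (hm : ∀ p i, 1 ≤ m p i) (hinj : Function.Injective m) (a : ι → ℝ) :
    ∫ x in unitCube N, (∑ p, a p * sineProd (m p) x) ^ 2 = (1 / 2) ^ N * ∑ p, a p ^ 2 := by
  have hint (p q : ι) :
      IntegrableOn (fun x => a p * a q * (sineProd (m p) x * sineProd (m q) x)) (unitCube N) :=
    ((continuous_const.mul ((contDiff_sineProd (n := 0) (m p)).continuous.mul
      (contDiff_sineProd (n := 0) (m q)).continuous)).continuousOn.integrableOn_compact
        (isCompact_unitBox N)).mono_set (unitCube_subset_unitBox N)
  have h (x : EuclideanSpace ℝ (Fin N)) : (∑ p, a p * sineProd (m p) x) ^ 2 =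
      ∑ p, ∑ q, a p * a q * (sineProd (m p) x * sineProd (m q) x) := by
    rw [sq, Finset.sum_mul_sum]
    exact Finset.sum_congr rfl fun p _ => Finset.sum_congr rfl fun q _ => by ring
  simp_rw [h]
  rw [integral_finsetSum _ fun p _ => integrable_finsetSum _ fun q _ => hint p q, Finset.mul_sum]
  refine Finset.sum_congr rfl fun p _ => ?_
  rw [integral_finsetSum _ fun q _ => hint p q, Finset.sum_eq_single p]
  · rw [integral_const_mul, integral_sineProd_mul (hm p) (hm p), if_pos rfl]
    ring
  · intro q _ hq
    rw [integral_const_mul, integral_sineProd_mul (hm p) (hm q),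
      if_neg fun h => hq (hinj h).symm, mul_zero]
  · simp

lemma integral_sq_lapN_sum_sineProd_le {N : ℕ} {ι : Type*} [Fintype ι] {m : ι → Fin N → ℕ}
    (hm : ∀ p i, 1 ≤ m p i) (hinj : Function.Injective m) {R : ℝ}
    (hR : ∀ p, ∑ i, (m p i : ℝ) ^ 2 ≤ R ^ 2) (a : ι → ℝ) :
    ∫ x in unitCube N, (lapN (fun y => ∑ p, a p * sineProd (m p) y) x) ^ 2 ≤
      (π * R) ^ 4 * ∫ x in unitCube N, (∑ p, a p * sineProd (m p) x) ^ 2 := by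
  have h (x : EuclideanSpace ℝ (Fin N)) : lapN (fun y => ∑ p, a p * sineProd (m p) y) x =
      ∑ p, (a p * -(π ^ 2 * ∑ i, (m p i : ℝ) ^ 2)) * sineProd (m p) x := by
    rw [lapN_sum _ fun p => contDiff_sineProd (m p)]
    exact Finset.sum_congr rfl fun p _ => by rw [lapN_sineProd, mul_assoc]
  simp_rw [h]
  rw [integral_sq_sum_sineProd hm hinj, integral_sq_sum_sineProd hm hinj, mul_left_comm]
  gcongr
  rw [Finset.mul_sum]
  refine Finset.sum_le_sum fun p _ => ?_
  have h0 : 0 ≤ ∑ i, (m p i : ℝ) ^ 2 := Finset.sum_nonneg fun i _ => sq_nonneg _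
  have h1 : (∑ i, (m p i : ℝ) ^ 2) ^ 2 ≤ (R ^ 2) ^ 2 := by gcongr; exact hR p
  calc (a p * -(π ^ 2 * ∑ i, (m p i : ℝ) ^ 2)) ^ 2
      = π ^ 4 * a p ^ 2 * (∑ i, (m p i : ℝ) ^ 2) ^ 2 := by ring
    _ ≤ π ^ 4 * a p ^ 2 * (R ^ 2) ^ 2 := by gcongr
    _ = (π * R) ^ 4 * a p ^ 2 := by ring

/-! ### Clamped modes -/

lemma hasDerivAt_indicator_Icc {f f' : ℝ → ℝ} (hf : ∀ t, HasDerivAt f (f' t) t)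
    (h0 : f 0 = 0) (h0' : f' 0 = 0) (h1 : f 1 = 0) (h1' : f' 1 = 0) (t : ℝ) :
    HasDerivAt ((Set.Icc (0 : ℝ) 1).indicator f) ((Set.Icc (0 : ℝ) 1).indicator f' t) t := by
  have hend {t : ℝ} (ht : f t = 0) (ht' : f' t = 0) :
      HasDerivAt ((Set.Icc (0 : ℝ) 1).indicator f) ((Set.Icc (0 : ℝ) 1).indicator f' t) t := by
    have h := (hasDerivAt_iff_isLittleO.1 (hf t))
    have e' : (Set.Icc (0 : ℝ) 1).indicator f' t = 0 := by simp [Set.indicator_apply, ht']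
    have e : (Set.Icc (0 : ℝ) 1).indicator f t = 0 := by simp [Set.indicator_apply, ht]
    rw [hasDerivAt_iff_isLittleO, e, e']
    rw [ht, ht'] at h
    simp only [smul_zero, sub_zero] at h ⊢
    exact (Asymptotics.isBigO_of_le _ fun x => norm_indicator_le_norm_self f x).trans_isLittleO h
  rcases lt_trichotomy t 0 with ht | rfl | ht
  · have hev : (Set.Icc (0 : ℝ) 1).indicator f =ᶠ[nhds t] fun _ => 0 := by
      filter_upwards [Iio_mem_nhds ht] with x hx
      exact Set.indicator_of_notMem (fun h => absurd h.1 (not_le.2 hx)) _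
    rw [Set.indicator_of_notMem fun h : t ∈ Set.Icc (0 : ℝ) 1 => absurd h.1 (not_le.2 ht)]
    exact (hasDerivAt_const t (0 : ℝ)).congr_of_eventuallyEq hev
  · exact hend h0 h0'
  rcases lt_trichotomy t 1 with ht1 | rfl | ht1
  · have hev : (Set.Icc (0 : ℝ) 1).indicator f =ᶠ[nhds t] f := by
      filter_upwards [Icc_mem_nhds ht ht1] with x hx
      exact Set.indicator_of_mem hx _
    rw [Set.indicator_of_mem (Set.mem_Icc.2 ⟨ht.le, ht1.le⟩)]
    exact (hf t).congr_of_eventuallyEq hev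
  · exact hend h1 h1'
  · have hev : (Set.Icc (0 : ℝ) 1).indicator f =ᶠ[nhds t] fun _ => 0 := by
      filter_upwards [Ioi_mem_nhds ht1] with x hx
      exact Set.indicator_of_notMem (fun h => absurd h.2 (not_le.2 hx)) _
    rw [Set.indicator_of_notMem fun h : t ∈ Set.Icc (0 : ℝ) 1 => absurd h.2 (not_le.2 ht1)]
    exact (hasDerivAt_const t (0 : ℝ)).congr_of_eventuallyEq hev

lemma continuous_indicator_Icc {f : ℝ → ℝ} (hf : Continuous f) (h0 : f 0 = 0) (h1 : f 1 = 0) :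
    Continuous ((Set.Icc (0 : ℝ) 1).indicator f) := by
  refine continuous_indicator (fun a ha => ?_) hf.continuousOn
  rw [frontier_Icc zero_le_one] at ha
  rcases ha with rfl | rfl <;> assumption

/-- The trigonometric polynomial `sin² (π t) sin (π (q + 2) t)`, which vanishes to third order
at the end points of the unit interval. -/
def clampedSine (q : ℕ) (t : ℝ) : ℝ := sin (π * t) ^ 2 * sineMode (q + 2) t

/-- The first derivative of `clampedSine q`. -/
def clampedSineDeriv (q : ℕ) (t : ℝ) : ℝ :=
  2 * π * (sin (π * t) * cos (π * t) * sineMode (q + 2) t) +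
    π * (q + 2 : ℕ) * (sin (π * t) ^ 2 * cos (π * (q + 2 : ℕ) * t))

/-- The second derivative of `clampedSine q`. -/
def clampedSineDerivTwo (q : ℕ) (t : ℝ) : ℝ :=
  2 * π ^ 2 * ((cos (π * t) ^ 2 - sin (π * t) ^ 2) * sineMode (q + 2) t) +
    4 * π * (π * (q + 2 : ℕ)) * (sin (π * t) * cos (π * t) * cos (π * (q + 2 : ℕ) * t)) -
    (π * (q + 2 : ℕ)) ^ 2 * (sin (π * t) ^ 2 * sineMode (q + 2) t)

lemma hasDerivAt_sineMode (n : ℕ) (t : ℝ) :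
    HasDerivAt (sineMode n) (π * n * cos (π * n * t)) t :=
  hasDerivAt_sin_mul _ t

lemma hasDerivAt_clampedSine (q : ℕ) (t : ℝ) :
    HasDerivAt (clampedSine q) (clampedSineDeriv q t) t := by
  have h := ((hasDerivAt_sin_mul π t).pow 2).mul (hasDerivAt_sineMode (q + 2) t)
  refine h.congr_deriv ?_
  simp only [clampedSineDeriv, Pi.pow_apply, Nat.cast_ofNat]
  ring

lemma hasDerivAt_clampedSineDeriv (q : ℕ) (t : ℝ) :
    HasDerivAt (clampedSineDeriv q) (clampedSineDerivTwo q t) t := by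
  have h := ((((hasDerivAt_sin_mul π t).mul (hasDerivAt_cos_mul π t)).mul
    (hasDerivAt_sineMode (q + 2) t)).const_mul (2 * π)).add
    ((((hasDerivAt_sin_mul π t).pow 2).mul
      (hasDerivAt_cos_mul (π * (q + 2 : ℕ)) t)).const_mul (π * (q + 2 : ℕ)))
  refine h.congr_deriv ?_
  simp only [clampedSineDerivTwo, Pi.pow_apply, Pi.mul_apply, sineMode]
  push_cast
  ring

lemma sineMode_zero (n : ℕ) : sineMode n 0 = 0 := by simp [sineMode]

lemma sineMode_one (n : ℕ) : sineMode n 1 = 0 := by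
  simp [sineMode, mul_comm π, sin_nat_mul_pi]

/-- The extension by zero of `clampedSine q` from the unit interval. -/
def clampedMode (q : ℕ) : ℝ → ℝ := (Set.Icc (0 : ℝ) 1).indicator (clampedSine q)

lemma hasDerivAt_clampedMode (q : ℕ) (t : ℝ) :
    HasDerivAt (clampedMode q) ((Set.Icc (0 : ℝ) 1).indicator (clampedSineDeriv q) t) t :=
  hasDerivAt_indicator_Icc (hasDerivAt_clampedSine q)
    (by simp [clampedSine]) (by simp [clampedSineDeriv])
    (by simp [clampedSine]) (by simp [clampedSineDeriv]) t

lemma hasDerivAt_indicator_clampedSineDeriv (q : ℕ) (t : ℝ) :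
    HasDerivAt ((Set.Icc (0 : ℝ) 1).indicator (clampedSineDeriv q))
      ((Set.Icc (0 : ℝ) 1).indicator (clampedSineDerivTwo q) t) t :=
  hasDerivAt_indicator_Icc (hasDerivAt_clampedSineDeriv q)
    (by simp [clampedSineDeriv]) (by simp [clampedSineDerivTwo, sineMode_zero])
    (by simp [clampedSineDeriv]) (by simp [clampedSineDerivTwo, sineMode_one]) t

lemma contDiff_clampedMode (q : ℕ) : ContDiff ℝ 2 (clampedMode q) := by
  have h1 : deriv (clampedMode q) = (Set.Icc (0 : ℝ) 1).indicator (clampedSineDeriv q) :=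
    funext fun t => (hasDerivAt_clampedMode q t).deriv
  have h2 : deriv ((Set.Icc (0 : ℝ) 1).indicator (clampedSineDeriv q)) =
      (Set.Icc (0 : ℝ) 1).indicator (clampedSineDerivTwo q) :=
    funext fun t => (hasDerivAt_indicator_clampedSineDeriv q t).deriv
  have hc : Continuous (clampedSineDerivTwo q) := by
    unfold clampedSineDerivTwo sineMode
    fun_prop
  rw [← one_add_one_eq_two, contDiff_succ_iff_deriv, h1]
  refine ⟨fun t => (hasDerivAt_clampedMode q t).differentiableAt, by simp, ?_⟩
  rw [contDiff_one_iff_deriv, h2]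
  exact ⟨fun t => (hasDerivAt_indicator_clampedSineDeriv q t).differentiableAt,
    continuous_indicator_Icc hc (by simp [clampedSineDerivTwo, sineMode_zero])
      (by simp [clampedSineDerivTwo, sineMode_one])⟩

lemma indicator_Icc_eq_zero {f : ℝ → ℝ} (h0 : f 0 = 0) (h1 : f 1 = 0) {t : ℝ}
    (ht : t ∉ Set.Ioo (0 : ℝ) 1) : (Set.Icc (0 : ℝ) 1).indicator f t = 0 := by
  refine Set.indicator_apply_eq_zero.2 fun h => ?_
  rcases h.1.eq_or_lt with rfl | hl
  · exact h0
  · rw [le_antisymm h.2 (not_lt.1 fun h' => ht ⟨hl, h'⟩)]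
    exact h1

/-- The product of the clamped modes with indices `q`. -/
def clampedProd {N : ℕ} (q : Fin N → ℕ) : EuclideanSpace ℝ (Fin N) → ℝ :=
  tensorProd fun i => clampedMode (q i)

lemma contDiff_clampedProd {N : ℕ} (q : Fin N → ℕ) : ContDiff ℝ 2 (clampedProd q) :=
  contDiff_tensorProd fun i => contDiff_clampedMode (q i)

lemma clampedMode_eq_zero (q : ℕ) {t : ℝ} (ht : t ∉ Set.Ioo (0 : ℝ) 1) : clampedMode q t = 0 :=
  indicator_Icc_eq_zero (by simp [clampedSine]) (by simp [clampedSine]) ht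

lemma clampedProd_eq_zero {N : ℕ} (q : Fin N → ℕ) {x : EuclideanSpace ℝ (Fin N)}
    (hx : x ∉ unitCube N) : clampedProd q x = 0 := by
  obtain ⟨i, hi⟩ : ∃ i, x i ∉ Set.Ioo (0 : ℝ) 1 := by
    simpa only [unitCube, Set.mem_ofPred_eq, not_forall] using hx
  exact Finset.prod_eq_zero (Finset.mem_univ i) (clampedMode_eq_zero _ hi)

lemma lapN_clampedProd_eq_zero {N : ℕ} (q : Fin N → ℕ) {x : EuclideanSpace ℝ (Fin N)}
    (hx : x ∉ unitCube N) : lapN (clampedProd q) x = 0 := by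
  obtain ⟨i, hi⟩ : ∃ i, x i ∉ Set.Ioo (0 : ℝ) 1 := by
    simpa only [unitCube, Set.mem_ofPred_eq, not_forall] using hx
  rw [clampedProd, lapN_tensorProd (fun i t => hasDerivAt_clampedMode (q i) t)
    (fun i t => hasDerivAt_indicator_clampedSineDeriv (q i) t)]
  refine Finset.sum_eq_zero fun j _ => Finset.prod_eq_zero (Finset.mem_univ i) ?_
  rcases eq_or_ne i j with rfl | hij
  · rw [Function.update_self]
    exact indicator_Icc_eq_zero (by simp [clampedSineDerivTwo, sineMode_zero])
      (by simp [clampedSineDerivTwo, sineMode_one]) hi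
  · rw [Function.update_of_ne hij]
    exact clampedMode_eq_zero _ hi

lemma tsupport_clampedProd_subset {N : ℕ} (q : Fin N → ℕ) :
    tsupport (clampedProd q) ⊆ {x | ∀ i, x i ∈ Set.Icc (0 : ℝ) 1} := by
  refine closure_minimal (fun x hx => unitCube_subset_unitBox N ?_) (isCompact_unitBox N).isClosed
  by_contra h
  exact hx (clampedProd_eq_zero q h)

lemma clampedProd_eqOn {N : ℕ} (q : Fin N → ℕ) {x : EuclideanSpace ℝ (Fin N)}
    (hx : x ∈ unitCube N) : clampedProd q x = ∏ i, clampedSine (q i) (x i) := by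
  simp only [clampedProd, tensorProd, clampedMode]
  exact Finset.prod_congr rfl fun i _ => Set.indicator_of_mem (Set.Ioo_subset_Icc_self (hx i))
    (clampedSine (q i))

lemma clampedSine_eq_sum (q : ℕ) (t : ℝ) :
    clampedSine q t = ∑ j : Fin 3, ![-1 / 4, 1 / 2, -1 / 4] j * sineMode (q + 2 * j) t := by
  have h0 : π * (q : ℝ) * t = π * (q + 2 : ℕ) * t - 2 * (π * t) := by push_cast; ring
  have h4 : π * ((q + 4 : ℕ) : ℝ) * t = π * (q + 2 : ℕ) * t + 2 * (π * t) := by push_cast; ring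
  simp only [Fin.sum_univ_three, clampedSine, sineMode, Matrix.cons_val, Fin.val_zero, Fin.val_one,
    Fin.val_two, mul_zero, add_zero, mul_one, Nat.reduceMul, h0, h4, sin_sub, sin_add,
    sin_sq_eq_half_sub]
  ring

/-- The multi-indices `m` with positive entries and `∑ i, (m i + d) ^ 2 ≤ R ^ 2`. -/
def freqs (N : ℕ) (d R : ℝ) : Finset (Fin N → ℕ) :=
  {m ∈ Fintype.piFinset fun _ : Fin N => Finset.Icc 1 ⌊R⌋₊ | ∑ i, ((m i : ℝ) + d) ^ 2 ≤ R ^ 2}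

lemma mem_freqs {N : ℕ} {d R : ℝ} (hd : 0 ≤ d) (hR : 0 ≤ R) {m : Fin N → ℕ} :
    m ∈ freqs N d R ↔ (∀ i, 1 ≤ m i) ∧ ∑ i, ((m i : ℝ) + d) ^ 2 ≤ R ^ 2 := by
  simp only [freqs, Finset.mem_filter, Fintype.mem_piFinset, Finset.mem_Icc]
  refine ⟨fun h => ⟨fun i => (h.1 i).1, h.2⟩, fun h => ⟨fun i => ⟨h.1 i, Nat.le_floor ?_⟩, h.2⟩⟩
  have h1 : ((m i : ℝ) + d) ^ 2 ≤ R ^ 2 :=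
    (Finset.single_le_sum (f := fun i => ((m i : ℝ) + d) ^ 2) (fun j _ => sq_nonneg _)
      (Finset.mem_univ i)).trans h.2
  linarith [(le_abs_self _).trans (abs_le_of_sq_le_sq h1 hR)]

lemma prod_clampedSine_mem_span {N : ℕ} {R : ℝ} (hR : 0 ≤ R) {q : Fin N → ℕ}
    (hq : q ∈ freqs N 4 R) :
    (fun x : EuclideanSpace ℝ (Fin N) => ∏ i, clampedSine (q i) (x i)) ∈
      Submodule.span ℝ (Set.range fun m : freqs N 0 R => sineProd (m : Fin N → ℕ)) := by
  rw [mem_freqs (by norm_num) hR] at hq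
  have h : (fun x : EuclideanSpace ℝ (Fin N) => ∏ i, clampedSine (q i) (x i)) =
      ∑ J : Fin N → Fin 3, (∏ i, (![-1 / 4, 1 / 2, -1 / 4] : Fin 3 → ℝ) (J i)) •
        sineProd fun i => q i + 2 * J i := by
    ext x
    simp_rw [clampedSine_eq_sum]
    rw [Finset.prod_univ_sum]
    simp [sineProd, tensorProd, Finset.prod_mul_distrib]
  rw [h]
  refine Submodule.sum_mem _ fun J _ => Submodule.smul_mem _ _ (Submodule.subset_span ?_)
  refine ⟨⟨fun i => q i + 2 * J i, ?_⟩, rfl⟩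
  rw [mem_freqs le_rfl hR]
  refine ⟨fun i => (hq.1 i).trans (Nat.le_add_right _ _), le_trans ?_ hq.2⟩
  refine Finset.sum_le_sum fun i _ => ?_
  have hJ : ((J i : ℕ) : ℝ) ≤ 2 := by exact_mod_cast Nat.lt_succ_iff.1 (J i).isLt
  push_cast
  exact pow_le_pow_left₀ (by positivity) (by linarith) 2

lemma linearIndependent_clampedProd (N : ℕ) (d R : ℝ) :
    LinearIndependent ℝ fun q : freqs N d R => clampedProd (q : Fin N → ℕ) := by
  refine Fintype.linearIndependent_iff.2 fun c hc => ?_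
  have hm (q : freqs N d R) (i : Fin N) : 1 ≤ (q : Fin N → ℕ) i + 2 := by omega
  have hinj : Function.Injective fun (q : freqs N d R) (i : Fin N) => (q : Fin N → ℕ) i + 2 :=
    fun q q' h => Subtype.ext (funext fun i => Nat.add_right_cancel (congrFun h i))
  have hP := integral_sq_sum_sineProd hm hinj c
  have h0 : ∫ x in unitCube N,
      (∑ q : freqs N d R, c q * sineProd (fun i => (q : Fin N → ℕ) i + 2) x) ^ 2 = 0 := by
    refine setIntegral_eq_zero_of_forall_eq_zero fun x hx => ?_
    have h1 : ∑ q : freqs N d R, c q * clampedProd (q : Fin N → ℕ) x = 0 := by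
      simpa using congrFun hc x
    have h2 (q : freqs N d R) : c q * clampedProd (q : Fin N → ℕ) x = (∏ i, sin (π * x i) ^ 2) *
        (c q * sineProd (fun i => (q : Fin N → ℕ) i + 2) x) := by
      rw [clampedProd_eqOn _ hx]
      simp only [clampedSine, sineProd, tensorProd, Finset.prod_mul_distrib]
      ring
    have h3 : ∏ i, sin (π * x i) ^ 2 ≠ 0 := Finset.prod_ne_zero_iff.2 fun i _ =>
      pow_ne_zero 2 (sin_pos_of_pos_of_lt_pi (mul_pos pi_pos (hx i).1)
        (mul_lt_of_lt_one_right pi_pos (hx i).2)).ne'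
    simp_rw [h2, ← Finset.mul_sum] at h1
    rw [(mul_eq_zero.1 h1).resolve_left h3]
    simp
  rw [h0] at hP
  have hsum : ∑ q, c q ^ 2 = 0 := (mul_eq_zero.1 hP.symm).resolve_left (by positivity)
  exact fun q => pow_eq_zero_iff (two_ne_zero) |>.1
    ((Finset.sum_eq_zero_iff_of_nonneg fun q _ => sq_nonneg _).1 hsum q (Finset.mem_univ q))

lemma lamkN_le_of_card_freqs {N k : ℕ} {R : ℝ} (hR : 0 ≤ R) (hk : k ≤ (freqs N 4 R).card)
    {Ω : Set (EuclideanSpace ℝ (Fin N))} (hΩ : IsOpen Ω)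
    (hbox : {x : EuclideanSpace ℝ (Fin N) | ∀ i, x i ∈ Set.Icc (0 : ℝ) 1} ⊆ Ω) :
    lamkN N k Ω ≤ (π * R) ^ 4 := by
  obtain ⟨e⟩ : Nonempty (Fin k ↪ freqs N 4 R) :=
    Function.Embedding.nonempty_of_card_le (by simpa using hk)
  have hcs (q : freqs N 4 R) : HasCompactSupport (clampedProd (q : Fin N → ℕ)) :=
    IsCompact.of_isClosed_subset (isCompact_unitBox N) (isClosed_tsupport _)
      (tsupport_clampedProd_subset _)
  have hC (q : freqs N 4 R) := contDiff_clampedProd (q : Fin N → ℕ)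
  refine lamkN_le_of_embedding e hΩ hC hcs
    (fun q => (tsupport_clampedProd_subset _).trans hbox) (by positivity)
    (fun c hc => integral_sq_pos_of_linearIndependent (fun q => (hC q).continuous) hcs
      (linearIndependent_clampedProd N 4 R) hc) fun c _ => ?_
  obtain ⟨a, ha⟩ : ∃ a : freqs N 0 R → ℝ, ∑ m, a m • sineProd (m : Fin N → ℕ) =
      ∑ q : freqs N 4 R, c q • fun x : EuclideanSpace ℝ (Fin N) =>
        ∏ i, clampedSine ((q : Fin N → ℕ) i) (x i) :=
    (Submodule.mem_span_range_iff_exists_fun ℝ).1 (Submodule.sum_mem _ fun q _ =>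
      Submodule.smul_mem _ _ (prod_clampedSine_mem_span hR q.2))
  have heq {x : EuclideanSpace ℝ (Fin N)} (hx : x ∈ unitCube N) :
      ∑ q : freqs N 4 R, c q * clampedProd (q : Fin N → ℕ) x =
        ∑ m : freqs N 0 R, a m * sineProd (m : Fin N → ℕ) x := by
    simp_rw [clampedProd_eqOn _ hx]
    simpa using (congrFun ha x).symm
  have hmeas := (isOpen_unitCube N).measurableSet
  have hB : ∫ x, (∑ q : freqs N 4 R, c q * clampedProd (q : Fin N → ℕ) x) ^ 2 =
      ∫ x in unitCube N, (∑ m : freqs N 0 R, a m * sineProd (m : Fin N → ℕ) x) ^ 2 := by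
    rw [← setIntegral_eq_integral_of_forall_compl_eq_zero (s := unitCube N) fun x hx => by
      simp [clampedProd_eq_zero _ hx]]
    exact setIntegral_congr_fun hmeas fun x hx => by simp only [heq hx]
  have hA : ∫ x, (lapN (fun y => ∑ q : freqs N 4 R, c q * clampedProd (q : Fin N → ℕ) y) x) ^ 2 =
      ∫ x in unitCube N,
        (lapN (fun y => ∑ m : freqs N 0 R, a m * sineProd (m : Fin N → ℕ) y) x) ^ 2 := by
    rw [← setIntegral_eq_integral_of_forall_compl_eq_zero (s := unitCube N) fun x hx => by
      rw [lapN_sum _ hC]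
      simp [lapN_clampedProd_eq_zero _ hx]]
    refine setIntegral_congr_fun hmeas fun x hx => ?_
    rw [lapN_congr]
    filter_upwards [(isOpen_unitCube N).mem_nhds hx] with y hy using heq hy
  rw [hA, hB]
  have hmem (m : freqs N 0 R) := (mem_freqs le_rfl hR).1 m.2
  exact integral_sq_lapN_sum_sineProd_le (fun m => (hmem m).1) Subtype.val_injective
    (fun m => by simpa using (hmem m).2) a

/-! ### Counting frequencies -/

lemma volume_setOf_forall_mem {N : ℕ} {s : Fin N → Set ℝ} (hs : ∀ i, MeasurableSet (s i)) :
    volume {x : EuclideanSpace ℝ (Fin N) | ∀ i, x i ∈ s i} = ∏ i, volume (s i) := by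
  have h : {x : EuclideanSpace ℝ (Fin N) | ∀ i, x i ∈ s i} =
      WithLp.ofLp ⁻¹' Set.univ.pi s := by
    ext x
    simp
  rw [h, (PiLp.volume_preserving_ofLp (Fin N)).measure_preimage
    (MeasurableSet.univ_pi hs).nullMeasurableSet, volume_pi_pi]

lemma volume_Ioc_union_Ico_le (a : ℝ) :
    volume (Set.Ioc (-(a + 1)) (-a) ∪ Set.Ico a (a + 1)) ≤ 2 := by
  refine (measure_union_le _ _).trans ?_
  rw [Real.volume_Ioc, Real.volume_Ico, show -a - -(a + 1) = 1 by ring, add_sub_cancel_left,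
    ENNReal.ofReal_one, one_add_one_eq_two]

lemma norm_abs_add_le {N : ℕ} {a : ℝ} (ha : 0 ≤ a) (y : EuclideanSpace ℝ (Fin N)) :
    √(∑ i, (|y i| + a) ^ 2) ≤ ‖y‖ + a * √N := by
  let z : EuclideanSpace ℝ (Fin N) := WithLp.toLp 2 fun i => |y i|
  let w : EuclideanSpace ℝ (Fin N) := WithLp.toLp 2 fun _ => a
  have h := norm_add_le z w
  have hz : ‖z‖ = ‖y‖ := by simp [EuclideanSpace.norm_eq, z]
  have hw : ‖w‖ = a * √N := by
    simp [EuclideanSpace.norm_eq, w, sqrt_sq ha, mul_comm]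
  have hzw : ‖z + w‖ = √(∑ i, (|y i| + a) ^ 2) := by
    simp [EuclideanSpace.norm_eq, z, w]
  rwa [hz, hw, hzw] at h

lemma ball_subset_biUnion_freqs {N : ℕ} {R : ℝ} (hR : 0 ≤ R) :
    Metric.ball (0 : EuclideanSpace ℝ (Fin N)) (R - 5 * √N) ⊆
      ⋃ q ∈ freqs N 4 R, {x : EuclideanSpace ℝ (Fin N) | ∀ i, x i ∈
        Set.Ioc (-(((q i : ℝ) - 1) + 1)) (-((q i : ℝ) - 1)) ∪
          Set.Ico ((q i : ℝ) - 1) (((q i : ℝ) - 1) + 1)} := by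
  intro y hy
  rw [mem_ball_zero_iff] at hy
  simp only [Set.mem_iUnion, exists_prop]
  refine ⟨fun i => ⌊|y i|⌋₊ + 1, (mem_freqs (by norm_num) hR).2 ⟨fun i => by omega, ?_⟩,
    fun i => ?_⟩
  · have h := norm_abs_add_le (a := 5) (by norm_num) y
    have h1 : ∑ i, (|y i| + 5) ^ 2 ≤ R ^ 2 := (Real.sqrt_le_left hR).1 (by linarith)
    refine le_trans (Finset.sum_le_sum fun i _ => ?_) h1
    have := Nat.floor_le (abs_nonneg (y i))
    push_cast
    exact pow_le_pow_left₀ (by positivity) (by linarith) 2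
  · have h1 := Nat.floor_le (abs_nonneg (y i))
    have h2 := Nat.lt_floor_add_one |y i|
    push_cast
    rcases abs_cases (y i) with ⟨h, h'⟩ | ⟨h, h'⟩
    · right
      constructor <;> linarith
    · left
      constructor <;> linarith

lemma omegaBall_pos (N : ℕ) : 0 < omegaBall N :=
  ENNReal.toReal_pos (Metric.measure_ball_pos _ _ one_pos).ne' measure_ball_lt_top.ne

lemma omegaBall_mul_le_card_freqs {N : ℕ} (hN : N ≠ 0) {R : ℝ} (hR : 5 * √N ≤ R) :
    omegaBall N * (R - 5 * √N) ^ N ≤ 2 ^ N * (freqs N 4 R).card := by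
  have : Nontrivial (EuclideanSpace ℝ (Fin N)) := by
    have := Fin.pos_iff_nonempty.1 (Nat.pos_of_ne_zero hN)
    infer_instance
  have hR0 : 0 ≤ R := le_trans (by positivity) hR
  have h1 : volume (Metric.ball (0 : EuclideanSpace ℝ (Fin N)) (R - 5 * √N)) ≤
      2 ^ N * ((freqs N 4 R).card : ENNReal) := by
    refine (measure_mono (ball_subset_biUnion_freqs hR0)).trans
      ((measure_biUnion_finset_le _ _).trans ?_)
    refine (Finset.sum_le_card_nsmul _ _ (2 ^ N) fun q _ => ?_).trans_eq ?_
    · rw [volume_setOf_forall_mem fun i => measurableSet_Ioc.union measurableSet_Ico]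
      refine (Finset.prod_le_prod' fun i _ => volume_Ioc_union_Ico_le _).trans_eq ?_
      simp
    · rw [nsmul_eq_mul, mul_comm]
  rw [Measure.addHaar_ball _ _ (sub_nonneg.2 hR), finrank_euclideanSpace_fin] at h1
  have h2 := ENNReal.toReal_mono (by finiteness) h1
  rw [ENNReal.toReal_mul, ENNReal.toReal_ofReal (pow_nonneg (sub_nonneg.2 hR) N)] at h2
  rw [mul_comm, omegaBall]
  simpa using h2

lemma lamStar_le_of_card_freqs {N k : ℕ} (hN : N ≠ 0) (hk : 1 ≤ k) {R : ℝ} (hR : 0 ≤ R)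
    (hkR : k ≤ (freqs N 4 R).card) : lamStar N k ≤ (π * R) ^ 4 := by
  have hN' : (N : ℝ) ≠ 0 := Nat.cast_ne_zero.2 hN
  have key (η : ℝ) (hη : 0 < η) : lamStar N k ≤ (1 + 2 * η) ^ 4 * (π * R) ^ 4 := by
    let Ω : Set (EuclideanSpace ℝ (Fin N)) := {x | ∀ i, x i ∈ Set.Ioo (-η) (1 + η)}
    have hΩ : IsOpen Ω := by
      simp only [Ω, Set.ofPred_forall]
      exact isOpen_iInter_of_finite fun i => isOpen_Ioo.preimage (by fun_prop)
    have hv : volume Ω = ENNReal.ofReal ((1 + 2 * η) ^ N) := by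
      rw [volume_setOf_forall_mem fun i => measurableSet_Ioo]
      simp only [Real.volume_Ioo, Finset.prod_const, Finset.card_univ, Fintype.card_fin]
      rw [← ENNReal.ofReal_pow (by linarith)]
      ring_nf
    have hp : 0 < (1 + 2 * η) ^ N := by positivity
    have h := lamStar_mul_le hN hk le_rfl hΩ (by rw [hv]; simpa using hp)
      (by rw [hv]; exact ENNReal.ofReal_lt_top)
    rw [one_mul, hv, ENNReal.toReal_ofReal hp.le, Nat.cast_one, one_mul, ← rpow_natCast,
      ← rpow_mul (by positivity), mul_div_cancel₀ _ hN'] at h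
    refine h.trans ?_
    rw [show (4 : ℝ) = ((4 : ℕ) : ℝ) by norm_num, rpow_natCast]
    refine mul_le_mul_of_nonneg_left (lamkN_le_of_card_freqs hR hkR hΩ fun x hx i => ?_)
      (by positivity)
    exact ⟨by linarith [(hx i).1], by linarith [(hx i).2]⟩
  have hc : Tendsto (fun η : ℝ => (1 + 2 * η) ^ 4 * (π * R) ^ 4) (nhdsWithin 0 (Set.Ioi 0))
      (nhds ((1 + 2 * 0) ^ 4 * (π * R) ^ 4)) :=
    (Continuous.tendsto (by fun_prop) 0).mono_left nhdsWithin_le_nhds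
  rw [mul_zero, add_zero, one_pow, one_mul] at hc
  exact ge_of_tendsto hc (eventually_nhdsWithin_of_forall key)

lemma lamStar_le_mul_add_pow {N k : ℕ} (hN : N ≠ 0) (hk : 1 ≤ k) :
    lamStar N k ≤ π ^ 4 * (2 * ((k : ℝ) / omegaBall N) ^ ((1 : ℝ) / N) + 5 * √N) ^ 4 := by
  have hω := omegaBall_pos N
  have hN' : (N : ℝ) ≠ 0 := Nat.cast_ne_zero.2 hN
  have h0 : 0 ≤ ((k : ℝ) / omegaBall N) ^ ((1 : ℝ) / N) := by positivity
  rw [← mul_pow]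
  refine lamStar_le_of_card_freqs hN hk (by positivity) ?_
  have h := omegaBall_mul_le_card_freqs hN
    (R := 2 * ((k : ℝ) / omegaBall N) ^ ((1 : ℝ) / N) + 5 * √N) (by linarith)
  rw [add_sub_cancel_right, mul_pow, ← rpow_natCast (((k : ℝ) / omegaBall N) ^ _),
    ← rpow_mul (by positivity), one_div_mul_cancel hN', rpow_one,
    show omegaBall N * (2 ^ N * (k / omegaBall N)) = 2 ^ N * k by field_simp] at h
  exact_mod_cast le_of_mul_le_mul_left h (by positivity)

/-! ### The two implications -/

lemma volume_unitCube (N : ℕ) : volume (unitCube N) = 1 := by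
  rw [unitCube, volume_setOf_forall_mem fun _ => measurableSet_Ioo]
  simp

lemma le_lamStar {N k : ℕ} {b : ℝ} (h : ∀ Ω : Set (EuclideanSpace ℝ (Fin N)), IsOpen Ω →
    volume Ω = 1 → b ≤ lamkN N k Ω) : b ≤ lamStar N k := by
  refine le_csInf ⟨_, unitCube N, isOpen_unitCube N, volume_unitCube N, rfl⟩ ?_
  rintro _ ⟨Ω, hΩ, hv, rfl⟩
  exact h Ω hΩ hv

lemma rpow_four_div {N : ℕ} {a : ℝ} (ha : 0 ≤ a) :
    a ^ ((4 : ℝ) / N) = (a ^ ((1 : ℝ) / N)) ^ 4 := by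
  rw [← rpow_natCast, ← rpow_mul ha]
  congr 1
  push_cast
  ring

lemma tendsto_lamStar_div_of_polya {N : ℕ} (hN : N ≠ 0)
    (h : ∀ k : ℕ, 1 ≤ k → ∀ Ω : Set (EuclideanSpace ℝ (Fin N)), IsOpen Ω →
      0 < volume Ω → volume Ω < ⊤ →
      lamkN N k Ω ≥
        16 * π ^ 4 * ((k : ℝ) / (omegaBall N * (volume Ω).toReal)) ^ ((4 : ℝ) / N)) :
    Tendsto (fun k : ℕ => lamStar N k / (k : ℝ) ^ ((4 : ℝ) / N)) atTop
      (nhds (16 * π ^ 4 / (omegaBall N) ^ ((4 : ℝ) / N))) := by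
  have hω := omegaBall_pos N
  have hN' : (0 : ℝ) < 1 / N := by positivity
  set w := (omegaBall N) ^ ((1 : ℝ) / N) with hw
  have hw0 : 0 < w := by positivity
  have hlim : Tendsto (fun k : ℕ => π ^ 4 * (2 / w + 5 * √N / (k : ℝ) ^ ((1 : ℝ) / N)) ^ 4) atTop
      (nhds (π ^ 4 * (2 / w + 0) ^ 4)) :=
    ((tendsto_const_nhds.add (((tendsto_rpow_atTop hN').comp
      tendsto_natCast_atTop_atTop).const_div_atTop _)).pow 4).const_mul _
  have hval : 16 * π ^ 4 / (omegaBall N) ^ ((4 : ℝ) / N) = π ^ 4 * (2 / w + 0) ^ 4 := by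
    rw [rpow_four_div hω.le, add_zero, div_pow]
    ring
  rw [hval]
  refine tendsto_of_tendsto_of_tendsto_of_le_of_le' tendsto_const_nhds hlim ?_ ?_
  · filter_upwards [eventually_ge_atTop 1] with k hk
    have hk0 : (0 : ℝ) < k := by exact_mod_cast hk
    rw [← hval, le_div_iff₀ (by positivity)]
    refine le_lamStar fun Ω hΩ hv => le_of_eq_of_le ?_ (h k hk Ω hΩ (by simp [hv]) (by simp [hv]))
    rw [hv, ENNReal.toReal_one, mul_one, div_rpow hk0.le hω.le]
    ring
  · filter_upwards [eventually_ge_atTop 1] with k hk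
    have hk0 : (0 : ℝ) < k := by exact_mod_cast hk
    have hkN : 0 < (k : ℝ) ^ ((1 : ℝ) / N) := by positivity
    rw [div_le_iff₀ (by positivity)]
    refine (lamStar_le_mul_add_pow hN hk).trans_eq ?_
    rw [div_rpow hk0.le hω.le, rpow_four_div hk0.le, mul_assoc, ← mul_pow, ← hw]
    field_simp

lemma polya_of_tendsto_lamStar_div {N : ℕ} (hN : N ≠ 0)
    (h : Tendsto (fun k : ℕ => lamStar N k / (k : ℝ) ^ ((4 : ℝ) / N)) atTop
      (nhds (16 * π ^ 4 / (omegaBall N) ^ ((4 : ℝ) / N)))) {k : ℕ} (hk : 1 ≤ k)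
    {Ω : Set (EuclideanSpace ℝ (Fin N))} (hΩ : IsOpen Ω) (h0 : 0 < volume Ω)
    (ht : volume Ω < ⊤) :
    16 * π ^ 4 * ((k : ℝ) / (omegaBall N * (volume Ω).toReal)) ^ ((4 : ℝ) / N) ≤
      lamkN N k Ω := by
  have hω := omegaBall_pos N
  have hV : 0 < (volume Ω).toReal := ENNReal.toReal_pos h0.ne' ht.ne
  have hk0 : (0 : ℝ) < k := by exact_mod_cast hk
  have hle : 16 * π ^ 4 / (omegaBall N) ^ ((4 : ℝ) / N) ≤
      (volume Ω).toReal ^ ((4 : ℝ) / N) * lamkN N k Ω / (k : ℝ) ^ ((4 : ℝ) / N) := by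
    refine le_of_tendsto (h.comp (tendsto_id.atTop_mul_const' (Nat.zero_lt_of_lt hk))) ?_
    filter_upwards [eventually_ge_atTop 1] with j hj
    have hj0 : (0 : ℝ) < j := by exact_mod_cast hj
    have := lamStar_mul_le hN hk hj hΩ h0 ht
    rw [mul_rpow hj0.le hV.le] at this
    simp only [Function.comp_apply, id, Nat.cast_mul]
    rw [mul_rpow hj0.le hk0.le, div_le_div_iff₀ (by positivity) (by positivity)]
    calc _ ≤ _ := mul_le_mul_of_nonneg_right this (by positivity)
      _ = _ := by ring
  rw [div_rpow hk0.le (by positivity), mul_rpow hω.le hV.le]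
  rw [div_le_div_iff₀ (by positivity) (by positivity)] at hle
  rw [← mul_div_assoc, div_le_iff₀ (by positivity)]
  linarith

/-- Equivalence of the generalized Pólya conjecture for the Dirichlet
biharmonic operator with the asymptotic behaviour of the minimal eigenvalues:
(i) `λ_k(Ω) ≥ 16π⁴(k/(ω_N|Ω|))^{4/N}` for all `k ≥ 1` and all open `Ω` of
finite positive measure, iff (ii) `λ_k*/k^{4/N} → 16π⁴/ω_N^{4/N}`. -/
theorem generalized_polya_iff_asymptotics (N : ℕ) (hN : 2 ≤ N) :
    (∀ k : ℕ, 1 ≤ k → ∀ Ω : Set (EuclideanSpace ℝ (Fin N)), IsOpen Ω →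
      0 < volume Ω → volume Ω < ⊤ →
      lamkN N k Ω ≥
        16 * π ^ 4 * ((k : ℝ) / (omegaBall N * (volume Ω).toReal)) ^ ((4 : ℝ) / N)) ↔
    Filter.Tendsto (fun k : ℕ => lamStar N k / (k : ℝ) ^ ((4 : ℝ) / N))
      Filter.atTop (nhds (16 * π ^ 4 / (omegaBall N) ^ ((4 : ℝ) / N))) := by
  have hN0 : N ≠ 0 := by omega
  exact ⟨tendsto_lamStar_div_of_polya hN0, fun h _ hk _ hΩ h0 ht =>
    polya_of_tendsto_lamStar_div hN0 h hk hΩ h0 ht⟩
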